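/- Let θ > 0 and let α, β be real numbers with 0 ≤ α < 1 and α < β < α + 1. Let c₂ := lim_{N→∞} (1/N) ∑_{j=1}^N ({jβ} − {jα})² (this limit exists). Then c₂ > 0, and if μ_N denotes the Ewens measure of parameter θ on S_N, E_N := ∑_{σ} μ_N(σ) X_N^I(σ), and Y_N(σ) := (X_N^I(σ) − E_N)/√(θ c₂ log N), then the laws of Y_N under μ_N converge weakly (i.e. in distribution) as N → ∞ to the standard Gaussian distribution N(0,1) on ℝ. -/

import Mathlib

open Filter Finset MeasureTheory

/-- The number of `j`-cycles of a permutation of `{1,…,N}`, where fixed points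
are counted as `1`-cycles. -/
def cycleCount (N : ℕ) (σ : Equiv.Perm (Fin N)) (j : ℕ) : ℕ :=
  if j = 1 then N - σ.support.card else σ.cycleType.count j

/-- The total number of cycles of `σ`, fixed points counted as `1`-cycles. -/
def totalCycles (N : ℕ) (σ : Equiv.Perm (Fin N)) : ℕ :=
  Multiset.card σ.cycleType + (N - σ.support.card)

/-- The Ewens probability of parameter `θ` of the permutation `σ`:
`θ^{K(σ)} / (θ(θ+1)⋯(θ+N−1))`. -/
noncomputable def ewens (θ : ℝ) (N : ℕ) (σ : Equiv.Perm (Fin N)) : ℝ :=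
  θ ^ totalCycles N σ / ∏ i ∈ Finset.range N, (θ + (i : ℝ))

/-- The number of eigenvalues of the permutation matrix of `σ` in the arc
`(e^{2iπα}, e^{2iπβ}]`: `X_N^I(σ) = ∑_{j=1}^N a_{N,j}(σ)(⌊jβ⌋ − ⌊jα⌋)`. -/
noncomputable def XNI (N : ℕ) (α β : ℝ) (σ : Equiv.Perm (Fin N)) : ℝ :=
  ∑ j ∈ Finset.Icc 1 N,
    (cycleCount N σ j : ℝ) * ((⌊(j : ℝ) * β⌋ : ℝ) - (⌊(j : ℝ) * α⌋ : ℝ))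

/-- The Ewens expectation of `X_N^I`. -/
noncomputable def ewensMean (θ : ℝ) (N : ℕ) (α β : ℝ) : ℝ :=
  ∑ σ : Equiv.Perm (Fin N), ewens θ N σ * XNI N α β σ

/-!
Since `∑ j * C_j = N` for the numbers `C_j` of `j`-cycles, the centred eigenvalue count is
`-∑ d_j (C_j - E C_j)` with bounded weights `d_j = {jβ} - {jα}`. The generating function
`E ∏ v_j ^ C_j = ∑_k Z_k(θ (v - 1)) h_{N-k} / h_N`, where `Z_k` is the cycle index of `S_k` and
`h_n = θ(θ + 1)⋯(θ + n - 1) / n!`, shows that the `C_j` with `j ≤ M` are close to independent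
Poisson variables of means `θ / j`, while a second moment bound makes the cycles longer than `M`
negligible after division by `√(log N)`. Choosing `M = N ^ (1 - o(1))`, the characteristic exponent
of the Poisson model is `-θ/2 ∑_{j ≤ M} u_j ^ 2 / j` up to a cubic error, where
`u_j = t d_j / √(θ c₂ log N)`, and it tends to `-t² / 2` because a Cesàro mean is also a
logarithmic mean. The limit `c₂` is positive because consecutive `d_j` differ by at least the
distance of `β - α` to the integers.
-/

open scoped Nat Topology

/-! ### Averages of class functions over the symmetric group -/

section CentralizerOrder

/-- The order `z_λ = ∏ j, j ^ m_j * m_j !` of the centralizer of a permutation whose cycle lengths,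
fixed points included, form the multiset `s` with multiplicities `m_j`. -/
def centralizerOrder (s : Multiset ℕ) : ℕ :=
  s.prod * ∏ j ∈ s.toFinset, (s.count j)!

theorem centralizerOrder_eq_of_subset {s : Multiset ℕ} {T : Finset ℕ} (h : s.toFinset ⊆ T) :
    centralizerOrder s = s.prod * ∏ j ∈ T, (s.count j)! := by
  rw [centralizerOrder, prod_subset h fun j _ hj ↦ ?_]
  rw [Multiset.mem_toFinset, ← Multiset.count_eq_zero] at hj
  rw [hj, Nat.factorial_zero]

theorem centralizerOrder_cons (j : ℕ) (s : Multiset ℕ) :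
    centralizerOrder (j ::ₘ s) = j * (s.count j + 1) * centralizerOrder s := by
  have hj := mem_insert_self j s.toFinset
  rw [centralizerOrder_eq_of_subset (T := insert j s.toFinset) (by simp),
    centralizerOrder_eq_of_subset (T := insert j s.toFinset) (by simp),
    ← mul_prod_erase _ _ hj, ← mul_prod_erase _ (fun i ↦ (s.count i)!) hj,
    prod_congr rfl fun i hi ↦ by rw [Multiset.count_cons_of_ne (ne_of_mem_erase hi)],
    Multiset.prod_cons, Multiset.count_cons_self, Nat.factorial_succ]
  ring

theorem centralizerOrder_pos {s : Multiset ℕ} (hs : ∀ j ∈ s, 0 < j) : 0 < centralizerOrder s :=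
  mul_pos (Multiset.prod_pos hs) (prod_pos fun _ _ ↦ Nat.factorial_pos _)

theorem centralizerOrder_add_replicate_one {s : Multiset ℕ} (hs : 1 ∉ s) (k : ℕ) :
    centralizerOrder (s + Multiset.replicate k 1) = k ! * centralizerOrder s := by
  induction k with
  | zero => simp
  | succ k ih =>
    rw [Multiset.replicate_succ, Multiset.add_cons, centralizerOrder_cons, ih, Multiset.count_add,
      Multiset.count_eq_zero_of_notMem hs, Multiset.count_replicate_self, Nat.factorial_succ]
    ring

theorem card_partition_eq_mul_centralizerOrder {ι : Type*} [Fintype ι] [DecidableEq ι]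
    (p : (Fintype.card ι).Partition) :
    #{σ : Equiv.Perm ι | σ.partition = p} * centralizerOrder p.parts = (Fintype.card ι)! := by
  set m := p.parts.filter (2 ≤ ·) with hm
  have hm_two : ∀ a ∈ m, 2 ≤ a := fun a ha ↦ (Multiset.mem_filter.1 ha).2
  have hparts : p.parts = m + Multiset.replicate (p.parts.count 1) 1 := by
    conv_lhs => rw [← Multiset.filter_add_not (2 ≤ ·) p.parts]
    rw [← Multiset.filter_eq']
    refine congrArg _ (Multiset.filter_congr fun x hx ↦ ?_)
    have := p.parts_pos hx
    lia
  have hsum : m.sum + p.parts.count 1 = Fintype.card ι := by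
    conv_rhs => rw [← p.parts_sum, hparts]
    simp
  have hiff : ∀ σ : Equiv.Perm ι, σ.partition = p ↔ σ.cycleType = m := fun σ ↦ by
    refine ⟨fun h ↦ by rw [hm, ← h, Equiv.Perm.filter_parts_partition_eq_cycleType], fun h ↦ ?_⟩
    rw [Nat.Partition.ext_iff, hparts, Equiv.Perm.parts_partition, ← Equiv.Perm.sum_cycleType, h]
    congr 2
    lia
  have hcount := Equiv.Perm.card_of_cycleType_mul_eq ι m
  rw [if_pos ⟨by lia, hm_two⟩] at hcount
  rw [filter_congr fun σ _ ↦ hiff σ, hparts,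
    centralizerOrder_add_replicate_one fun h ↦ absurd (hm_two 1 h) (by lia), ← hcount,
    show Fintype.card ι - m.sum = p.parts.count 1 by lia, centralizerOrder]
  ring

end CentralizerOrder

section ClassAverage

variable {E : Type*} [AddCommGroup E] [Module ℝ E]

/-- The average over the symmetric group on `n` letters of the class function `F`, a function of
the multiset of cycle lengths (fixed points included), as a sum over cycle types. -/
noncomputable def classAverage (n : ℕ) (F : Multiset ℕ → E) : E :=
  ∑ p : n.Partition, (centralizerOrder p.parts : ℝ)⁻¹ • F p.parts

theorem sum_partition_eq_factorial_smul_classAverage {ι : Type*} [Fintype ι] [DecidableEq ι]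
    (F : Multiset ℕ → E) :
    ∑ σ : Equiv.Perm ι, F σ.partition.parts =
      ((Fintype.card ι)! : ℝ) • classAverage (Fintype.card ι) F := by
  rw [← sum_fiberwise univ (fun σ ↦ σ.partition), classAverage, smul_sum]
  refine sum_congr rfl fun p _ ↦ ?_
  have hz : (centralizerOrder p.parts : ℝ) ≠ 0 :=
    mod_cast (centralizerOrder_pos fun _ ↦ p.parts_pos).ne'
  rw [sum_congr rfl fun σ hσ ↦ by rw [(mem_filter.1 hσ).2], sum_const,
    ← card_partition_eq_mul_centralizerOrder p, ← Nat.cast_smul_eq_nsmul ℝ, smul_smul,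
    Nat.cast_mul, mul_inv_cancel_right₀ hz]

theorem classAverage_zero (F : Multiset ℕ → E) : classAverage 0 F = F 0 := by
  simp [classAverage, centralizerOrder]

theorem classAverage_sum {ι : Type*} (n : ℕ) (T : Finset ι) (F : ι → Multiset ℕ → E) :
    classAverage n (fun s ↦ ∑ i ∈ T, F i s) = ∑ i ∈ T, classAverage n (F i) := by
  simp only [classAverage, smul_sum]
  exact sum_comm

theorem classAverage_smul {R : Type*} [DistribSMul R E] [SMulCommClass R ℝ E] (n : ℕ) (c : R)
    (F : Multiset ℕ → E) :
    classAverage n (fun s ↦ c • F s) = c • classAverage n F := by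
  simp only [classAverage, smul_sum, smul_comm c]

-- Marking one of the cycles of length `j` and removing it.
theorem classAverage_mul_count_smul {n j : ℕ} (hj : 1 ≤ j) (hjn : j ≤ n) (F : Multiset ℕ → E) :
    classAverage n (fun s ↦ (j * s.count j : ℝ) • F s) =
      classAverage (n - j) (fun s ↦ F (j ::ₘ s)) := by
  let e := Nat.Partition.partitionWithPartEquiv hj hjn
  have hmem : ∀ p : n.Partition,
      (centralizerOrder p.parts : ℝ)⁻¹ • (j * p.parts.count j : ℝ) • F p.parts ≠ 0 →
      j ∈ p.parts := fun p hp ↦ by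
    by_contra h
    simp [Multiset.count_eq_zero_of_notMem h] at hp
  rw [classAverage, ← sum_filter_of_ne fun p _ ↦ hmem p, ← sum_subtype_eq_sum_filter,
    subtype_univ, classAverage, ← e.symm.sum_comp]
  refine sum_congr rfl fun q _ ↦ ?_
  have hj0 : (j : ℝ) ≠ 0 := by positivity
  rw [Nat.Partition.partitionWithPartEquiv_symm_apply_parts, smul_smul, centralizerOrder_cons,
    Multiset.count_cons_self]
  push_cast
  congr 1
  field_simp

theorem sum_mul_count_parts {n : ℕ} (p : n.Partition) :
    ∑ j ∈ Icc 1 n, j * p.parts.count j = n := by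
  conv_rhs => rw [← p.parts_sum, ← Multiset.map_id p.parts, sum_multiset_map_count]
  simp only [id, smul_eq_mul, mul_comm]
  symm
  refine sum_subset (fun j hj ↦ ?_) fun j _ hj ↦ ?_
  · rw [Multiset.mem_toFinset] at hj
    exact mem_Icc.2 ⟨p.parts_pos hj, p.le_of_mem_parts hj⟩
  · rw [Multiset.mem_toFinset, ← Multiset.count_eq_zero] at hj
    rw [hj, mul_zero]

theorem smul_classAverage_eq_sum (n : ℕ) (F : Multiset ℕ → E) :
    (n : ℝ) • classAverage n F =
      ∑ j ∈ Icc 1 n, classAverage (n - j) (fun s ↦ F (j ::ₘ s)) := by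
  have hn : ∀ p : n.Partition,
      (n : ℝ) • F p.parts = ∑ j ∈ Icc 1 n, (j * p.parts.count j : ℝ) • F p.parts := fun p ↦ by
    rw [← sum_smul]
    exact congrArg (· • F p.parts) (mod_cast (sum_mul_count_parts p).symm)
  calc (n : ℝ) • classAverage n F
      = classAverage n (fun s ↦ ∑ j ∈ Icc 1 n, (j * s.count j : ℝ) • F s) := by
        rw [← classAverage_smul]
        exact sum_congr rfl fun p _ ↦ congrArg _ (hn p)
    _ = _ := by
        rw [classAverage_sum]
        exact sum_congr rfl fun j hj ↦
          classAverage_mul_count_smul (mem_Icc.1 hj).1 (mem_Icc.1 hj).2 F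

end ClassAverage

/-! ### The cycle index of the symmetric group -/

section CycleIndex

variable {𝕜 : Type*} [RCLike 𝕜]

/-- The cycle index of the symmetric group on `n` letters, its `j`-th variable being specialized
to `w j`: the average over permutations of the product of `w` over the cycle lengths. -/
noncomputable def cycleIndex (w : ℕ → 𝕜) (n : ℕ) : 𝕜 :=
  classAverage n fun s ↦ (s.map w).prod

theorem cycleIndex_zero (w : ℕ → 𝕜) : cycleIndex w 0 = 1 := by
  simp [cycleIndex, classAverage_zero]

theorem natCast_mul_cycleIndex (w : ℕ → 𝕜) (n : ℕ) :
    n * cycleIndex w n = ∑ j ∈ Icc 1 n, w j * cycleIndex w (n - j) := by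
  have h := smul_classAverage_eq_sum n fun s ↦ (s.map w).prod
  simp only [Multiset.map_cons, Multiset.prod_cons, ← smul_eq_mul (w _), classAverage_smul,
    RCLike.real_smul_eq_coe_mul, RCLike.ofReal_natCast] at h
  exact h

theorem eq_cycleIndex_of_natCast_mul_eq {w a : ℕ → 𝕜} (h0 : a 0 = 1)
    (h : ∀ n : ℕ, n * a n = ∑ j ∈ Icc 1 n, w j * a (n - j)) (n : ℕ) : a n = cycleIndex w n := by
  induction n using Nat.strong_induction_on with
  | _ n ih =>
    rcases n.eq_zero_or_pos with rfl | hn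
    · rw [h0, cycleIndex_zero]
    · apply mul_left_cancel₀ (Nat.cast_ne_zero.2 hn.ne' : (n : 𝕜) ≠ 0)
      rw [h, natCast_mul_cycleIndex]
      refine sum_congr rfl fun j hj ↦ ?_
      rw [ih (n - j) (Nat.sub_lt hn (mem_Icc.1 hj).1)]

theorem cycleIndex_pow_mul (w : ℕ → 𝕜) (r : 𝕜) (n : ℕ) :
    cycleIndex (fun j ↦ r ^ j * w j) n = r ^ n * cycleIndex w n := by
  refine (eq_cycleIndex_of_natCast_mul_eq (a := fun m ↦ r ^ m * cycleIndex w m)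
    (by simp [cycleIndex_zero]) (fun m ↦ ?_) n).symm
  rw [mul_left_comm, natCast_mul_cycleIndex, mul_sum]
  refine sum_congr rfl fun j hj ↦ ?_
  rw [← pow_mul_pow_sub r (mem_Icc.1 hj).2]
  ring

theorem norm_cycleIndex_le (w : ℕ → 𝕜) (n : ℕ) :
    ‖cycleIndex w n‖ ≤ cycleIndex (fun j ↦ ‖w j‖) n := by
  refine (norm_sum_le univ fun p : n.Partition ↦
    (centralizerOrder p.parts : ℝ)⁻¹ • (p.parts.map w).prod).trans_eq (sum_congr rfl fun p _ ↦ ?_)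
  rw [norm_smul, norm_inv, RCLike.norm_natCast, smul_eq_mul]
  exact congrArg _ (Multiset.prod_hom' p.parts (normHom : 𝕜 →*₀ ℝ) w).symm

open PowerSeries in
theorem coeff_X_mul_derivative (f : 𝕜⟦X⟧) (n : ℕ) :
    coeff n (X * derivative 𝕜 f) = n * coeff n f := by
  cases n with
  | zero => simp
  | succ n => rw [coeff_succ_X_mul, coeff_derivative, Nat.cast_succ, mul_comm]

open PowerSeries in
theorem coeff_X_mul_mk_mul (w : ℕ → 𝕜) (f : 𝕜⟦X⟧) (n : ℕ) :
    coeff n (X * (PowerSeries.mk fun j ↦ w (j + 1)) * f) =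
      ∑ j ∈ Icc 1 n, w j * coeff (n - j) f := by
  cases n with
  | zero => simp
  | succ n =>
    rw [mul_assoc, coeff_succ_X_mul, PowerSeries.coeff_mul,
      Finset.Nat.sum_antidiagonal_eq_sum_range_succ fun i j ↦ coeff i _ * coeff j f,
      range_eq_Ico, ← Finset.Ico_add_one_right_eq_Icc,
      ← sum_Ico_add' (fun j ↦ w j * coeff (n + 1 - j) f) 0 (n + 1) 1]
    simp

open PowerSeries in
theorem X_mul_derivative_mk_cycleIndex (w : ℕ → 𝕜) :
    X * derivative 𝕜 (PowerSeries.mk (cycleIndex w)) =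
      X * (PowerSeries.mk fun j ↦ w (j + 1)) * PowerSeries.mk (cycleIndex w) := by
  ext n
  simp only [coeff_X_mul_derivative, coeff_X_mul_mk_mul, coeff_mk, natCast_mul_cycleIndex]

open PowerSeries in
theorem cycleIndex_add (w w' : ℕ → 𝕜) (n : ℕ) :
    cycleIndex (w + w') n =
      ∑ p ∈ antidiagonal n, cycleIndex w p.1 * cycleIndex w' p.2 := by
  set f := PowerSeries.mk (cycleIndex w) with hf
  set g := PowerSeries.mk (cycleIndex w') with hg
  have hode : X * derivative 𝕜 (f * g) =
      X * (PowerSeries.mk fun j ↦ (w + w') (j + 1)) * (f * g) := by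
    have hadd : (PowerSeries.mk fun j ↦ (w + w') (j + 1)) =
        (PowerSeries.mk fun j ↦ w (j + 1)) + PowerSeries.mk fun j ↦ w' (j + 1) := by
      ext; simp
    rw [hadd, Derivation.leibniz, smul_eq_mul, smul_eq_mul]
    linear_combination
      f * X_mul_derivative_mk_cycleIndex w' + g * X_mul_derivative_mk_cycleIndex w
  have hcoeff : ∀ m, coeff m (f * g) = cycleIndex (w + w') m :=
    eq_cycleIndex_of_natCast_mul_eq (by simp [hf, hg, cycleIndex_zero]) fun m ↦ by
      rw [← coeff_X_mul_derivative, hode, coeff_X_mul_mk_mul]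
  rw [← hcoeff, PowerSeries.coeff_mul]
  simp only [hf, hg, coeff_mk]

section Single

variable {j : ℕ} (hj : j ≠ 0) (y : 𝕜)
include hj

theorem natCast_mul_cycleIndex_single (n : ℕ) :
    n * cycleIndex (Pi.single j y) n =
      if j ≤ n then y * cycleIndex (Pi.single j y) (n - j) else 0 := by
  rw [natCast_mul_cycleIndex]
  simp only [Pi.single_apply, ite_mul, zero_mul, sum_ite_eq', mem_Icc,
    Nat.one_le_iff_ne_zero, hj, ne_eq, not_false_eq_true, true_and]

theorem cycleIndex_single_of_not_dvd {n : ℕ} (hn : ¬ j ∣ n) : cycleIndex (Pi.single j y) n = 0 := by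
  induction n using Nat.strong_induction_on with
  | _ n ih =>
    have hn0 : n ≠ 0 := by rintro rfl; exact hn (dvd_zero j)
    apply mul_left_cancel₀ (Nat.cast_ne_zero.2 hn0 : (n : 𝕜) ≠ 0)
    rw [natCast_mul_cycleIndex_single hj, mul_zero, ite_eq_right_iff]
    intro hjn
    rw [ih (n - j) (by lia) (by rwa [Nat.dvd_sub_iff_left hjn dvd_rfl]), mul_zero]

theorem cycleIndex_single_mul (m : ℕ) : cycleIndex (Pi.single j y) (j * m) = (y / j) ^ m / m ! := by
  induction m with
  | zero => simp [cycleIndex_zero]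
  | succ m ih =>
    have h := natCast_mul_cycleIndex_single hj y (j * (m + 1))
    rw [if_pos (Nat.le_mul_of_pos_right j m.succ_pos), Nat.mul_succ, Nat.add_sub_cancel, ih] at h
    have hj' : (j : 𝕜) ≠ 0 := Nat.cast_ne_zero.2 hj
    have hm : (m + 1 : 𝕜) ≠ 0 := Nat.cast_add_one_ne_zero m
    have hm' : (m ! : 𝕜) ≠ 0 := Nat.cast_ne_zero.2 m.factorial_ne_zero
    rw [Nat.mul_succ, Nat.factorial_succ, pow_succ]
    push_cast at h ⊢
    field_simp at h ⊢
    linear_combination h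

theorem hasSum_cycleIndex_single :
    HasSum (cycleIndex (Pi.single j y)) (NormedSpace.exp (y / j)) := by
  have hinj : Function.Injective (j * ·) := mul_right_injective₀ hj
  rw [← hinj.hasSum_iff fun n hn ↦ cycleIndex_single_of_not_dvd hj y fun ⟨m, hm⟩ ↦ hn ⟨m, hm.symm⟩]
  convert! NormedSpace.expSeries_div_hasSum_exp (y / j) using 1
  exact funext (cycleIndex_single_mul hj y)

end Single

theorem hasSum_cycleIndex {S : Finset ℕ} (hS : 0 ∉ S) {w : ℕ → 𝕜} (hw : ∀ j ∉ S, w j = 0) :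
    HasSum (cycleIndex w) (NormedSpace.exp (∑ j ∈ S, w j / j)) := by
  induction S using Finset.induction_on generalizing w with
  | empty =>
    have hw : w = Pi.single 1 0 := by ext j; simp [hw j]
    simpa [hw] using hasSum_cycleIndex_single one_ne_zero (0 : 𝕜)
  | insert j S hjS ih =>
    rw [mem_insert, not_or] at hS
    have hsplit : w = Pi.single j (w j) + Function.update w j 0 := by
      ext i
      rcases eq_or_ne i j with rfl | hij <;> simp [*]
    have hsum : ∑ i ∈ S, Function.update w j 0 i / i = ∑ i ∈ S, w i / i :=
      sum_congr rfl fun i hi ↦ by rw [Function.update_of_ne (ne_of_mem_of_not_mem hi hjS)]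
    have h₁ := hasSum_cycleIndex_single (Ne.symm hS.1) (w j)
    have h₂ := ih hS.2 (w := Function.update w j 0) fun i hi ↦ by
      rcases eq_or_ne i j with rfl | hij
      · simp
      · rw [Function.update_of_ne hij, hw i (by simp [*])]
    rw [hsum] at h₂
    have hconv : cycleIndex w = fun n ↦ ∑ p ∈ antidiagonal n,
        cycleIndex (Pi.single j (w j)) p.1 * cycleIndex (Function.update w j 0) p.2 := by
      ext n
      rw [← cycleIndex_add, ← hsplit]
    rw [hconv, sum_insert hjS, NormedSpace.exp_add, ← h₁.tsum_eq, ← h₂.tsum_eq,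
      tsum_mul_tsum_eq_tsum_sum_antidiagonal_of_summable_norm h₁.summable.norm h₂.summable.norm]
    exact (summable_norm_sum_mul_antidiagonal_of_summable_norm h₁.summable.norm
      h₂.summable.norm).of_norm.hasSum

end CycleIndex

/-! ### The Ewens normalizing constants -/

section EwensNormalizer

/-- The value `θ (θ + 1) ⋯ (θ + n - 1) / n !` of the cycle index at the constant sequence `θ`, that
is, the normalizing constant of the Ewens measure relative to the uniform measure. -/
noncomputable def ewensNormalizer (θ : ℝ) (n : ℕ) : ℝ :=
  ∏ i ∈ range n, (θ + i) / (i + 1)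

/-- The ratio by which the mean number of `k`-cycles under the Ewens measure differs from its limit
`θ / k`; it vanishes for `k > N`. -/
noncomputable def ewensRatio (θ : ℝ) (N k : ℕ) : ℝ :=
  if k ≤ N then ewensNormalizer θ (N - k) / ewensNormalizer θ N else 0

theorem ewensNormalizer_zero (θ : ℝ) : ewensNormalizer θ 0 = 1 := by simp [ewensNormalizer]

theorem succ_mul_ewensNormalizer_succ (θ : ℝ) (n : ℕ) :
    (n + 1) * ewensNormalizer θ (n + 1) = (θ + n) * ewensNormalizer θ n := by
  rw [ewensNormalizer, prod_range_succ, ← ewensNormalizer]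
  field_simp

theorem ewensNormalizer_eq_div_factorial (θ : ℝ) (n : ℕ) :
    ewensNormalizer θ n = (∏ i ∈ range n, (θ + i)) / n ! := by
  rw [ewensNormalizer, prod_div_distrib, ← prod_range_add_one_eq_factorial]
  push_cast
  rfl

theorem natCast_mul_ewensNormalizer (θ : ℝ) (n : ℕ) :
    n * ewensNormalizer θ n = ∑ j ∈ Icc 1 n, θ * ewensNormalizer θ (n - j) := by
  calc n * ewensNormalizer θ n = ∑ k ∈ range n, θ * ewensNormalizer θ k := by
        induction n with
        | zero => simp
        | succ n ih =>
          rw [sum_range_succ, ← ih, Nat.cast_succ, succ_mul_ewensNormalizer_succ]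
          ring
    _ = ∑ j ∈ Icc 1 n, θ * ewensNormalizer θ (n - j) := by
        rw [← sum_range_reflect, ← Finset.Ico_add_one_right_eq_Icc, range_eq_Ico,
          ← sum_Ico_add' (fun j ↦ θ * ewensNormalizer θ (n - j)) 0 n 1]
        exact sum_congr rfl fun j _ ↦ by rw [Nat.sub_sub, add_comm 1 j]

theorem cycleIndex_const {𝕜 : Type*} [RCLike 𝕜] (θ : ℝ) (n : ℕ) :
    cycleIndex (fun _ ↦ (θ : 𝕜)) n = (ewensNormalizer θ n : ℝ) := by
  refine (eq_cycleIndex_of_natCast_mul_eq (a := fun m ↦ ((ewensNormalizer θ m : ℝ) : 𝕜))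
    (by simp [ewensNormalizer_zero]) (fun m ↦ ?_) n).symm
  exact_mod_cast congrArg (RCLike.ofReal (K := 𝕜)) (natCast_mul_ewensNormalizer θ m)

variable {θ : ℝ} (hθ : 0 < θ)
include hθ

theorem ewensNormalizer_pos (n : ℕ) : 0 < ewensNormalizer θ n :=
  prod_pos fun i _ ↦ by positivity

theorem monotone_natCast_mul_ewensNormalizer :
    Monotone fun n : ℕ ↦ n * ewensNormalizer θ n := by
  refine monotone_nat_of_le_succ fun n ↦ ?_
  rw [Nat.cast_succ, succ_mul_ewensNormalizer_succ]
  have := ewensNormalizer_pos hθ n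
  gcongr
  linarith

theorem ewensRatio_nonneg (N k : ℕ) : 0 ≤ ewensRatio θ N k := by
  unfold ewensRatio
  split_ifs
  · exact div_nonneg (ewensNormalizer_pos hθ _).le (ewensNormalizer_pos hθ _).le
  · exact le_rfl

theorem ewensRatio_zero (N : ℕ) : ewensRatio θ N 0 = 1 := by
  simp [ewensRatio, (ewensNormalizer_pos hθ N).ne']

theorem sum_ewensRatio (N : ℕ) : ∑ j ∈ Icc 1 N, ewensRatio θ N j = N / θ := by
  have hN := (ewensNormalizer_pos hθ N).ne'
  have h := natCast_mul_ewensNormalizer θ N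
  rw [← mul_sum] at h
  have hratio : ∀ j ∈ Icc 1 N,
      ewensRatio θ N j = ewensNormalizer θ (N - j) / ewensNormalizer θ N :=
    fun j hj ↦ if_pos (mem_Icc.1 hj).2
  rw [sum_congr rfl hratio, ← sum_div]
  field_simp
  linarith

theorem sub_mul_ewensRatio_le {N k : ℕ} (hk : k ≤ N) : (N - k) * ewensRatio θ N k ≤ N := by
  have h := monotone_natCast_mul_ewensNormalizer hθ (Nat.sub_le N k)
  simp only [Nat.cast_sub hk] at h
  rwa [ewensRatio, if_pos hk, ← mul_div_assoc, div_le_iff₀ (ewensNormalizer_pos hθ N)]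

theorem ewensRatio_le {N : ℕ} (hN : 1 ≤ N) (k : ℕ) : ewensRatio θ N k ≤ (1 + 1 / θ) * N := by
  have hN' : (1 : ℝ) ≤ N := mod_cast hN
  have hθN : 0 ≤ 1 / θ * N := by positivity
  rcases lt_trichotomy k N with hk | rfl | hk
  · have hk' : (k : ℝ) + 1 ≤ N := mod_cast hk
    have := sub_mul_ewensRatio_le hθ hk.le
    nlinarith [ewensRatio_nonneg hθ N k]
  · have h : ewensRatio θ k k ≤ ∑ j ∈ Icc 1 k, ewensRatio θ k j :=
      single_le_sum (fun j _ ↦ ewensRatio_nonneg hθ k j) (right_mem_Icc.2 hN)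
    rw [sum_ewensRatio hθ] at h
    linarith [one_div_mul_eq_div θ (k : ℝ)]
  · rw [ewensRatio, if_neg hk.not_ge]
    positivity

theorem ewensRatio_le_two {N k : ℕ} (hk : 2 * k ≤ N) : ewensRatio θ N k ≤ 2 := by
  rcases N.eq_zero_or_pos with rfl | hN
  · obtain rfl : k = 0 := by lia
    rw [ewensRatio_zero hθ]
    exact one_le_two
  · have h := sub_mul_ewensRatio_le hθ (show k ≤ N by lia)
    have hN' : (0 : ℝ) < N := mod_cast hN
    have hk' : (2 * k : ℝ) ≤ N := mod_cast hk
    nlinarith [ewensRatio_nonneg hθ N k]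

theorem mul_ewensRatio_sub_succ {N k : ℕ} (hk : k < N) :
    (N - k) * (ewensRatio θ N k - ewensRatio θ N (k + 1)) = (θ - 1) * ewensRatio θ N (k + 1) := by
  obtain ⟨m, rfl⟩ : ∃ m, N = m + (k + 1) := ⟨N - (k + 1), by lia⟩
  have hN := (ewensNormalizer_pos hθ (m + (k + 1))).ne'
  have h := succ_mul_ewensNormalizer_succ θ m
  rw [ewensRatio, ewensRatio, if_pos (by lia), if_pos (by lia), Nat.add_sub_cancel,
    show m + (k + 1) - k = m + 1 by lia]
  push_cast
  field_simp
  linear_combination h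

theorem abs_ewensRatio_sub_one_le {N k : ℕ} (hk : 2 * k ≤ N) :
    |ewensRatio θ N k - 1| ≤ 4 * |θ - 1| * k / N := by
  induction k with
  | zero => simp [ewensRatio_zero hθ]
  | succ k ih =>
    have hN : (0 : ℝ) < N := mod_cast (show 0 < N by lia)
    have hk' : (2 * (k + 1) : ℝ) ≤ N := mod_cast hk
    have hstep : |ewensRatio θ N k - ewensRatio θ N (k + 1)| ≤ 4 * |θ - 1| / N := by
      have h := congrArg abs (mul_ewensRatio_sub_succ hθ (show k < N by lia))
      rw [abs_mul, abs_mul, abs_of_nonneg (by linarith : (0 : ℝ) ≤ N - k),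
        abs_of_nonneg (ewensRatio_nonneg hθ _ _)] at h
      rw [le_div_iff₀ hN]
      nlinarith [abs_nonneg (θ - 1), abs_nonneg (ewensRatio θ N k - ewensRatio θ N (k + 1)),
        mul_le_mul_of_nonneg_left (ewensRatio_le_two hθ hk) (abs_nonneg (θ - 1))]
    calc |ewensRatio θ N (k + 1) - 1|
        ≤ |ewensRatio θ N (k + 1) - ewensRatio θ N k| + |ewensRatio θ N k - 1| :=
          abs_sub_le _ _ _
      _ ≤ 4 * |θ - 1| / N + 4 * |θ - 1| * k / N := by
          rw [abs_sub_comm]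
          exact add_le_add hstep (ih (by lia))
      _ = 4 * |θ - 1| * (k + 1 : ℕ) / N := by
          push_cast
          ring

end EwensNormalizer

/-! ### Expectations under the Ewens measure -/

section CycleCounts

variable {N : ℕ} (σ : Equiv.Perm (Fin N))

theorem count_parts_partition (j : ℕ) : σ.partition.parts.count j = cycleCount N σ j := by
  rw [Equiv.Perm.parts_partition, Multiset.count_add, Multiset.count_replicate, cycleCount,
    Fintype.card_fin]
  split_ifs with h h' h'
  · subst h
    rw [Multiset.count_eq_zero_of_notMem fun h₁ ↦
      absurd (Equiv.Perm.two_le_of_mem_cycleType h₁) (by lia), zero_add]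
  all_goals lia

theorem card_parts_partition : Multiset.card σ.partition.parts = totalCycles N σ := by
  simp [Equiv.Perm.parts_partition, totalCycles]

theorem prod_map_parts_partition {R : Type*} [CommMonoid R] (v : ℕ → R) :
    (σ.partition.parts.map v).prod = ∏ j ∈ Icc 1 N, v j ^ cycleCount N σ j := by
  rw [prod_multiset_map_count]
  simp only [count_parts_partition]
  refine prod_subset (fun j hj ↦ ?_) fun j _ hj ↦ ?_
  · rw [Multiset.mem_toFinset] at hj
    have hjN := σ.partition.le_of_mem_parts hj
    rw [Fintype.card_fin] at hjN
    exact mem_Icc.2 ⟨σ.partition.parts_pos hj, hjN⟩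
  · rw [Multiset.mem_toFinset, ← Multiset.count_eq_zero, count_parts_partition] at hj
    rw [hj, pow_zero]

end CycleCounts

/-- The expectation of `F` under the Ewens measure of parameter `θ`. -/
noncomputable def ewensExpect {E : Type*} [AddCommGroup E] [Module ℝ E] (θ : ℝ) (N : ℕ)
    (F : Equiv.Perm (Fin N) → E) : E :=
  ∑ σ, ewens θ N σ • F σ

section EwensExpect

variable {E : Type*} [AddCommGroup E] [Module ℝ E]

theorem ewensExpect_sub (θ : ℝ) (N : ℕ) (F G : Equiv.Perm (Fin N) → E) :
    ewensExpect θ N (fun σ ↦ F σ - G σ) = ewensExpect θ N F - ewensExpect θ N G := by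
  simp only [ewensExpect, smul_sub, sum_sub_distrib]

theorem ewensExpect_add (θ : ℝ) (N : ℕ) (F G : Equiv.Perm (Fin N) → E) :
    ewensExpect θ N (fun σ ↦ F σ + G σ) = ewensExpect θ N F + ewensExpect θ N G := by
  simp only [ewensExpect, smul_add, sum_add_distrib]

theorem ewensExpect_sum {ι : Type*} (θ : ℝ) (N : ℕ) (T : Finset ι)
    (F : ι → Equiv.Perm (Fin N) → E) :
    ewensExpect θ N (fun σ ↦ ∑ i ∈ T, F i σ) = ∑ i ∈ T, ewensExpect θ N (F i) := by
  simp only [ewensExpect, smul_sum]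
  exact sum_comm

theorem ewensExpect_smul {R : Type*} [DistribSMul R E] [SMulCommClass R ℝ E] (θ : ℝ) (N : ℕ)
    (c : R) (F : Equiv.Perm (Fin N) → E) :
    ewensExpect θ N (fun σ ↦ c • F σ) = c • ewensExpect θ N F := by
  simp only [ewensExpect, smul_sum, smul_comm c]

theorem ewens_eq_pow_card_parts_div (θ : ℝ) {N : ℕ} (σ : Equiv.Perm (Fin N)) :
    ewens θ N σ = (N ! * ewensNormalizer θ N)⁻¹ * θ ^ Multiset.card σ.partition.parts := by
  rw [ewens, card_parts_partition, ewensNormalizer_eq_div_factorial,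
    mul_div_cancel₀ _ (Nat.cast_ne_zero.2 N.factorial_ne_zero), div_eq_inv_mul]

theorem ewensExpect_parts_partition (θ : ℝ) (N : ℕ) (F : Multiset ℕ → E) :
    ewensExpect θ N (fun σ ↦ F σ.partition.parts) =
      (ewensNormalizer θ N)⁻¹ • classAverage N fun s ↦ θ ^ Multiset.card s • F s := by
  simp only [ewensExpect, ewens_eq_pow_card_parts_div, mul_smul, ← smul_sum]
  rw [sum_partition_eq_factorial_smul_classAverage fun s ↦ θ ^ Multiset.card s • F s,
    Fintype.card_fin, smul_smul, mul_inv_rev,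
    inv_mul_cancel_right₀ (Nat.cast_ne_zero.2 N.factorial_ne_zero)]

theorem ewensExpect_prod_map_parts {𝕜 : Type*} [RCLike 𝕜] (θ : ℝ) (N : ℕ) (v : ℕ → 𝕜) :
    ewensExpect θ N (fun σ ↦ (σ.partition.parts.map v).prod) =
      ∑ k ∈ range (N + 1), (ewensRatio θ N k : 𝕜) * cycleIndex (fun j ↦ θ * (v j - 1)) k := by
  have hweight : ∀ s : Multiset ℕ,
      θ ^ Multiset.card s • (s.map v).prod = (s.map fun j ↦ (θ : 𝕜) * v j).prod := fun s ↦ by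
    rw [Multiset.prod_map_mul, Multiset.map_const', Multiset.prod_replicate,
      RCLike.real_smul_eq_coe_mul, RCLike.ofReal_pow]
  have hsplit : (fun j ↦ (θ : 𝕜) * v j) = (fun j ↦ (θ : 𝕜) * (v j - 1)) + fun _ ↦ (θ : 𝕜) := by
    ext j
    simp only [Pi.add_apply]
    ring
  rw [ewensExpect_parts_partition θ N fun s ↦ (s.map v).prod]
  simp only [hweight]
  rw [← cycleIndex, hsplit, cycleIndex_add,
    Finset.Nat.sum_antidiagonal_eq_sum_range_succ
      (fun i j ↦ cycleIndex (fun l ↦ (θ : 𝕜) * (v l - 1)) i * cycleIndex (fun _ ↦ (θ : 𝕜)) j),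
    smul_sum]
  refine sum_congr rfl fun k hk ↦ ?_
  rw [cycleIndex_const, ewensRatio, if_pos (Nat.lt_succ_iff.1 (mem_range.1 hk)),
    RCLike.real_smul_eq_coe_mul, RCLike.ofReal_div, RCLike.ofReal_inv]
  ring

variable {θ : ℝ} (hθ : 0 < θ)
include hθ

theorem ewens_nonneg {N : ℕ} (σ : Equiv.Perm (Fin N)) : 0 ≤ ewens θ N σ :=
  div_nonneg (pow_nonneg hθ.le _) (prod_nonneg fun _ _ ↦ by positivity)

theorem sum_ewens (N : ℕ) : ∑ σ, ewens θ N σ = 1 := by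
  have h := ewensExpect_parts_partition θ N fun _ ↦ (1 : ℝ)
  have hprod : ∀ s : Multiset ℕ, θ ^ Multiset.card s = (s.map fun _ ↦ θ).prod := fun s ↦ by
    rw [Multiset.map_const', Multiset.prod_replicate]
  simp only [ewensExpect, smul_eq_mul, mul_one, hprod] at h
  rw [h, ← cycleIndex]
  have hconst := cycleIndex_const (𝕜 := ℝ) θ N
  simp only [RCLike.ofReal_real_eq_id, id] at hconst
  rw [hconst, inv_mul_cancel₀ (ewensNormalizer_pos hθ N).ne']

theorem ewensExpect_const (N : ℕ) (c : E) : ewensExpect θ N (fun _ ↦ c) = c := by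
  rw [ewensExpect, ← sum_smul, sum_ewens hθ, one_smul]

theorem ewensExpect_mono {N : ℕ} {F G : Equiv.Perm (Fin N) → ℝ} (h : ∀ σ, F σ ≤ G σ) :
    ewensExpect θ N F ≤ ewensExpect θ N G :=
  sum_le_sum fun σ _ ↦ mul_le_mul_of_nonneg_left (h σ) (ewens_nonneg hθ σ)

theorem norm_ewensExpect_le {E : Type*} [NormedAddCommGroup E] [NormedSpace ℝ E] {N : ℕ}
    (F : Equiv.Perm (Fin N) → E) : ‖ewensExpect θ N F‖ ≤ ewensExpect θ N (fun σ ↦ ‖F σ‖) := by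
  refine (norm_sum_le _ _).trans_eq (sum_congr rfl fun σ _ ↦ ?_)
  rw [norm_smul, Real.norm_of_nonneg (ewens_nonneg hθ σ), smul_eq_mul]

theorem ewensExpect_abs_le_sqrt {N : ℕ} (W : Equiv.Perm (Fin N) → ℝ) :
    ewensExpect θ N (fun σ ↦ |W σ|) ≤ √(ewensExpect θ N fun σ ↦ W σ ^ 2) := by
  refine Real.le_sqrt_of_sq_le ?_
  have h := Real.pow_arith_mean_le_arith_mean_pow univ (ewens θ N) (fun σ ↦ |W σ|)
    (fun σ _ ↦ ewens_nonneg hθ σ) (sum_ewens hθ N) (fun σ _ ↦ abs_nonneg _) 2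
  simpa only [ewensExpect, smul_eq_mul, sq_abs] using h

-- Marking one of the `j`-cycles and removing it leaves an Ewens permutation of `N - j` letters.
theorem ewensExpect_cycleCount_smul {j : ℕ} (hj : 1 ≤ j) (N : ℕ) (F : Multiset ℕ → E) :
    ewensExpect θ N (fun σ ↦ (cycleCount N σ j : ℝ) • F σ.partition.parts) =
      (θ / j * ewensRatio θ N j) •
        ewensExpect θ (N - j) (fun σ ↦ F (j ::ₘ σ.partition.parts)) := by
  have hj0 : (j : ℝ) ≠ 0 := by positivity
  simp only [← count_parts_partition]
  rcases le_or_gt j N with hjN | hjN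
  · rw [ewensExpect_parts_partition θ N fun s ↦ (s.count j : ℝ) • F s,
      ewensExpect_parts_partition θ (N - j) fun s ↦ F (j ::ₘ s)]
    have hmark := classAverage_mul_count_smul hj hjN fun s ↦ θ ^ Multiset.card s • F s
    simp only [mul_smul, classAverage_smul, Multiset.card_cons, pow_succ'] at hmark
    rw [← smul_right_injective E hj0 |>.eq_iff]
    simp only [smul_comm (θ ^ _) (Nat.cast _ : ℝ)]
    rw [smul_comm (j : ℝ), hmark]
    simp only [smul_smul, ewensRatio, if_pos hjN]
    have hN := (ewensNormalizer_pos hθ N).ne'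
    have hNj := (ewensNormalizer_pos hθ (N - j)).ne'
    congr 1
    field_simp
  · rw [ewensRatio, if_neg hjN.not_ge, mul_zero, zero_smul, ← ewensExpect_const hθ N (0 : E)]
    refine sum_congr rfl fun σ _ ↦ ?_
    dsimp only
    rw [Multiset.count_eq_zero_of_notMem fun h ↦ ?_, Nat.cast_zero, zero_smul]
    have := σ.partition.le_of_mem_parts h
    rw [Fintype.card_fin] at this
    lia

end EwensExpect

/-! ### Moments of the cycle counts -/

section CycleCountMoments

theorem ewensRatio_mul_ewensRatio_sub {θ : ℝ} (hθ : 0 < θ) (N i j : ℕ) :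
    ewensRatio θ N i * ewensRatio θ (N - i) j = ewensRatio θ N (i + j) := by
  rcases le_or_gt i N with hi | hi
  · have h : j ≤ N - i ↔ i + j ≤ N := by lia
    simp only [ewensRatio, if_pos hi, h, Nat.sub_sub]
    split_ifs
    · rw [div_mul_div_comm, mul_comm, mul_div_mul_right _ _ (ewensNormalizer_pos hθ _).ne']
    · exact mul_zero _
  · rw [ewensRatio, if_neg hi.not_ge, zero_mul, ewensRatio, if_neg (by lia)]

variable {θ : ℝ} (hθ : 0 < θ)
include hθ

theorem ewensExpect_cycleCount {j : ℕ} (hj : 1 ≤ j) (N : ℕ) :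
    ewensExpect θ N (fun σ ↦ (cycleCount N σ j : ℝ)) = θ / j * ewensRatio θ N j := by
  have h := ewensExpect_cycleCount_smul hθ hj N fun _ ↦ (1 : ℝ)
  simpa only [ewensExpect_const hθ, smul_eq_mul, mul_one] using h

theorem ewensExpect_cycleCount_mul_cycleCount {i j : ℕ} (hi : 1 ≤ i) (hj : 1 ≤ j) (N : ℕ) :
    ewensExpect θ N (fun σ ↦ (cycleCount N σ i : ℝ) * cycleCount N σ j) =
      θ / i * (θ / j) * ewensRatio θ N (i + j) + if i = j then θ / i * ewensRatio θ N i else 0 := by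
  have h := ewensExpect_cycleCount_smul hθ hi N fun s ↦ (s.count j : ℝ)
  simp only [Multiset.count_cons, Nat.cast_add, count_parts_partition, ewensExpect_add,
    ewensExpect_const hθ, ewensExpect_cycleCount hθ hj, smul_eq_mul, eq_comm (a := j)] at h
  rw [h, ← ewensRatio_mul_ewensRatio_sub hθ N i j]
  split_ifs <;> push_cast <;> ring

theorem abs_ewensRatio_add_sub_mul_le {N i j : ℕ} (hi : 4 * i ≤ N) (hj : 4 * j ≤ N) :
    |ewensRatio θ N (i + j) - ewensRatio θ N i * ewensRatio θ N j| ≤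
      12 * |θ - 1| * (i + j) / N := by
  have hij := abs_ewensRatio_sub_one_le hθ (show 2 * (i + j) ≤ N by lia)
  have hi1 := abs_ewensRatio_sub_one_le hθ (show 2 * i ≤ N by lia)
  have hj1 := abs_ewensRatio_sub_one_le hθ (show 2 * j ≤ N by lia)
  have hmul : |(ewensRatio θ N i - 1) * ewensRatio θ N j| ≤ 4 * |θ - 1| * i / N * 2 := by
    rw [abs_mul, abs_of_nonneg (ewensRatio_nonneg hθ N j)]
    exact mul_le_mul hi1 (ewensRatio_le_two hθ (by lia)) (ewensRatio_nonneg hθ N j)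
      (by positivity)
  calc |ewensRatio θ N (i + j) - ewensRatio θ N i * ewensRatio θ N j|
      = |ewensRatio θ N (i + j) - 1 - (ewensRatio θ N i - 1) * ewensRatio θ N j -
          (ewensRatio θ N j - 1)| := by ring_nf
    _ ≤ 4 * |θ - 1| * (i + j : ℕ) / N + 4 * |θ - 1| * i / N * 2 + 4 * |θ - 1| * j / N :=
        (abs_sub _ _).trans (add_le_add ((abs_sub _ _).trans (add_le_add hij hmul)) hj1)
    _ ≤ 12 * |θ - 1| * (i + j) / N := by
        have : 0 ≤ 4 * |θ - 1| * j / N := by positivity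
        push_cast
        linear_combination this

theorem abs_ewensExpect_mul_sub_mul_le {N i j : ℕ} (hi : 1 ≤ i) (hj : 1 ≤ j) (hiN : 4 * i ≤ N)
    (hjN : 4 * j ≤ N) :
    |ewensExpect θ N (fun σ ↦ (cycleCount N σ i : ℝ) * cycleCount N σ j) -
        ewensExpect θ N (fun σ ↦ (cycleCount N σ i : ℝ)) *
          ewensExpect θ N (fun σ ↦ (cycleCount N σ j : ℝ))| ≤
      12 * |θ - 1| * θ ^ 2 / N * (1 / i + 1 / j) + if i = j then 2 * θ / i else 0 := by
  rw [ewensExpect_cycleCount_mul_cycleCount hθ hi hj, ewensExpect_cycleCount hθ hi,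
    ewensExpect_cycleCount hθ hj, add_sub_right_comm]
  refine (abs_add_le _ _).trans (add_le_add ?_ ?_)
  · have : (0 : ℝ) < i := mod_cast hi
    have : (0 : ℝ) < j := mod_cast hj
    calc |θ / i * (θ / j) * ewensRatio θ N (i + j) -
          θ / i * ewensRatio θ N i * (θ / j * ewensRatio θ N j)|
        = θ / i * (θ / j) *
            |ewensRatio θ N (i + j) - ewensRatio θ N i * ewensRatio θ N j| := by
          rw [← abs_of_pos (show 0 < θ / i * (θ / j) by positivity), ← abs_mul,
            abs_of_pos (show 0 < θ / i * (θ / j) by positivity)]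
          ring_nf
      _ ≤ θ / i * (θ / j) * (12 * |θ - 1| * (i + j) / N) := by
          gcongr
          exact abs_ewensRatio_add_sub_mul_le hθ hiN hjN
      _ = 12 * |θ - 1| * θ ^ 2 / N * (1 / i + 1 / j) := by
          field_simp
          ring
  · split_ifs
    · rw [abs_of_nonneg (mul_nonneg (by positivity) (ewensRatio_nonneg hθ N i)), mul_comm,
        mul_div_assoc]
      exact mul_le_mul_of_nonneg_right (ewensRatio_le_two hθ (by lia)) (by positivity)
    · rw [abs_zero]

theorem sum_ewensExpect_cycleCount_le {N : ℕ} {T : Finset ℕ} (hT : T ⊆ Icc 1 N) {a : ℝ}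
    (ha : 0 < a) (haT : ∀ j ∈ T, a ≤ j) :
    ∑ j ∈ T, ewensExpect θ N (fun σ ↦ (cycleCount N σ j : ℝ)) ≤ N / a := by
  calc ∑ j ∈ T, ewensExpect θ N (fun σ ↦ (cycleCount N σ j : ℝ))
      ≤ ∑ j ∈ T, θ / a * ewensRatio θ N j := by
        refine sum_le_sum fun j hj ↦ ?_
        rw [ewensExpect_cycleCount hθ (mem_Icc.1 (hT hj)).1]
        have := ewensRatio_nonneg hθ N j
        have := haT j hj
        gcongr
    _ ≤ ∑ j ∈ Icc 1 N, θ / a * ewensRatio θ N j :=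
        sum_le_sum_of_subset_of_nonneg hT fun j _ _ ↦
          mul_nonneg (by positivity) (ewensRatio_nonneg hθ N j)
    _ = N / a := by
        rw [← mul_sum, sum_ewensRatio hθ]
        field_simp

end CycleCountMoments

theorem sum_Ioc_one_div_le_log {M Q : ℕ} (hM : 1 ≤ M) (hQ : M ≤ Q) :
    ∑ j ∈ Ioc M Q, 1 / (j : ℝ) ≤ Real.log (Q / M) := by
  have hM0 : (0 : ℝ) < M := mod_cast hM
  induction Q, hQ using Nat.le_induction with
  | base => simp
  | succ n hn ih =>
    have hn0 : (0 : ℝ) < n := hM0.trans_le (mod_cast hn)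
    calc ∑ j ∈ Ioc M (n + 1), 1 / (j : ℝ)
        = ∑ j ∈ Ioc M n, 1 / (j : ℝ) + (1 - (((n + 1 : ℕ) : ℝ) / n)⁻¹) := by
          rw [← insert_Ioc_right_eq_Ioc_add_one hn, sum_insert (by simp), add_comm]
          push_cast
          field_simp
          ring
      _ ≤ Real.log (n / M) + Real.log ((n + 1 : ℕ) / n) :=
          add_le_add ih (Real.one_sub_inv_le_log_of_pos (by positivity))
      _ = Real.log ((n + 1 : ℕ) / M) := by
          rw [add_comm, ← Real.log_mul (by positivity) (by positivity),
            div_mul_div_cancel₀ hn0.ne']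

/-- The centred linear statistic `∑ j ∈ T, u j (C_j - E C_j)` of the cycle counts `C_j`. -/
noncomputable def centeredCycleSum (θ : ℝ) (N : ℕ) (T : Finset ℕ) (u : ℕ → ℝ)
    (σ : Equiv.Perm (Fin N)) : ℝ :=
  ∑ j ∈ T, u j * (cycleCount N σ j - ewensExpect θ N fun τ ↦ (cycleCount N τ j : ℝ))

section CenteredCycleSum

variable {θ : ℝ} (hθ : 0 < θ)
include hθ

theorem ewensExpect_centeredCycleSum_sq (N : ℕ) (T : Finset ℕ) (u : ℕ → ℝ) :
    ewensExpect θ N (fun σ ↦ centeredCycleSum θ N T u σ ^ 2) =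
      ∑ i ∈ T, ∑ j ∈ T, u i * u j *
        (ewensExpect θ N (fun σ ↦ (cycleCount N σ i : ℝ) * cycleCount N σ j) -
          ewensExpect θ N (fun σ ↦ (cycleCount N σ i : ℝ)) *
            ewensExpect θ N (fun σ ↦ (cycleCount N σ j : ℝ))) := by
  set m : ℕ → ℝ := fun j ↦ ewensExpect θ N fun σ ↦ (cycleCount N σ j : ℝ) with hm
  have hexpand : ∀ σ, centeredCycleSum θ N T u σ ^ 2 =
      ∑ i ∈ T, ∑ j ∈ T, (u i * u j) • ((cycleCount N σ i : ℝ) * cycleCount N σ j -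
        m i • (cycleCount N σ j : ℝ) - (m j • (cycleCount N σ i : ℝ) - m i * m j)) := fun σ ↦ by
    rw [centeredCycleSum, sq, sum_mul_sum]
    refine sum_congr rfl fun i _ ↦ sum_congr rfl fun j _ ↦ ?_
    simp only [smul_eq_mul, hm]
    ring
  simp only [hexpand, ewensExpect_sum, ewensExpect_smul, ewensExpect_sub, ewensExpect_const hθ]
  refine sum_congr rfl fun i _ ↦ sum_congr rfl fun j _ ↦ ?_
  simp only [smul_eq_mul, hm]
  ring

theorem ewensExpect_centeredCycleSum_sq_le {N : ℕ} {T : Finset ℕ} (hT : T ⊆ Icc 1 (N / 4))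
    {u : ℕ → ℝ} {ε : ℝ} (hu : ∀ j, |u j| ≤ ε) :
    ewensExpect θ N (fun σ ↦ centeredCycleSum θ N T u σ ^ 2) ≤
      ε ^ 2 * ((24 * |θ - 1| * θ ^ 2 + 2 * θ) * ∑ j ∈ T, 1 / (j : ℝ)) := by
  have hε : 0 ≤ ε := (abs_nonneg _).trans (hu 0)
  have hmem : ∀ i ∈ T, 1 ≤ i ∧ 4 * i ≤ N := fun i hi ↦ by
    have := mem_Icc.1 (hT hi)
    lia
  have hcard : (#T : ℝ) / N ≤ 1 := by
    have h := card_le_card hT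
    rw [Nat.card_Icc] at h
    exact div_le_one_of_le₀ (mod_cast (by lia : #T ≤ N)) N.cast_nonneg
  have : 0 ≤ ∑ j ∈ T, 1 / (j : ℝ) := sum_nonneg fun j _ ↦ by positivity
  have hdiag : ∑ i ∈ T, (if i ∈ T then 2 * θ / (i : ℝ) else 0) = 2 * θ * ∑ j ∈ T, 1 / (j : ℝ) := by
    rw [mul_sum]
    exact sum_congr rfl fun i hi ↦ by rw [if_pos hi, mul_one_div]
  rw [ewensExpect_centeredCycleSum_sq hθ]
  calc _ ≤ ∑ i ∈ T, ∑ j ∈ T, ε ^ 2 * (12 * |θ - 1| * θ ^ 2 / N * (1 / i + 1 / j) +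
          if i = j then 2 * θ / i else 0) := by
        refine sum_le_sum fun i hi ↦ sum_le_sum fun j hj ↦ (le_abs_self _).trans ?_
        rw [abs_mul, abs_mul, sq]
        exact mul_le_mul (mul_le_mul (hu i) (hu j) (abs_nonneg _) hε)
          (abs_ewensExpect_mul_sub_mul_le hθ (hmem i hi).1 (hmem j hj).1 (hmem i hi).2
            (hmem j hj).2) (abs_nonneg _) (by positivity)
    _ = ε ^ 2 * (24 * |θ - 1| * θ ^ 2 * (#T / N) * (∑ j ∈ T, 1 / (j : ℝ)) +
          2 * θ * ∑ j ∈ T, 1 / (j : ℝ)) := by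
        simp only [← mul_sum, sum_add_distrib, sum_const, nsmul_eq_mul, sum_ite_eq, hdiag]
        ring
    _ ≤ ε ^ 2 * (24 * |θ - 1| * θ ^ 2 * 1 * (∑ j ∈ T, 1 / (j : ℝ)) +
          2 * θ * ∑ j ∈ T, 1 / (j : ℝ)) := by gcongr
    _ = _ := by ring

theorem ewensExpect_abs_centeredCycleSum_le (N : ℕ) (T : Finset ℕ) {u : ℕ → ℝ} {ε : ℝ}
    (hu : ∀ j, |u j| ≤ ε) :
    ewensExpect θ N (fun σ ↦ |centeredCycleSum θ N T u σ|) ≤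
      ε * (2 * ∑ j ∈ T, ewensExpect θ N fun σ ↦ (cycleCount N σ j : ℝ)) := by
  have hε : 0 ≤ ε := (abs_nonneg _).trans (hu 0)
  set m : ℕ → ℝ := fun j ↦ ewensExpect θ N fun σ ↦ (cycleCount N σ j : ℝ) with hm
  have hm0 : ∀ j, 0 ≤ m j := fun j ↦ by
    rw [← ewensExpect_const hθ N (0 : ℝ)]
    exact ewensExpect_mono hθ fun σ ↦ Nat.cast_nonneg _
  calc ewensExpect θ N (fun σ ↦ |centeredCycleSum θ N T u σ|)
      ≤ ewensExpect θ N (fun σ ↦ ∑ j ∈ T, ε • ((cycleCount N σ j : ℝ) + m j)) := by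
        refine ewensExpect_mono hθ fun σ ↦ (abs_sum_le_sum_abs _ _).trans (sum_le_sum fun j _ ↦ ?_)
        rw [abs_mul, smul_eq_mul]
        refine mul_le_mul (hu j) ((abs_sub _ _).trans_eq ?_) (abs_nonneg _) hε
        rw [abs_of_nonneg (Nat.cast_nonneg _), abs_of_nonneg (hm0 j)]
    _ = ε * (2 * ∑ j ∈ T, m j) := by
        simp only [ewensExpect_sum, ewensExpect_smul, ewensExpect_add, ewensExpect_const hθ]
        simp only [smul_eq_mul, ← two_mul, ← mul_sum, hm]

theorem ewensExpect_abs_centeredCycleSum_Ioc_le {M N : ℕ} (hM : 1 ≤ M) (hMN : 4 * M ≤ N)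
    {u : ℕ → ℝ} {ε : ℝ} (hu : ∀ j, |u j| ≤ ε) :
    ewensExpect θ N (fun σ ↦ |centeredCycleSum θ N (Ioc M N) u σ|) ≤
      ε * (√((24 * |θ - 1| * θ ^ 2 + 2 * θ) * Real.log (N / M)) + 8) := by
  have hε : 0 ≤ ε := (abs_nonneg _).trans (hu 0)
  have : (0 : ℝ) < M := mod_cast hM
  have hN0 : (0 : ℝ) < N := mod_cast (by lia : 0 < N)
  have hsplit : ∀ σ, centeredCycleSum θ N (Ioc M N) u σ =
      centeredCycleSum θ N (Ioc M (N / 4)) u σ + centeredCycleSum θ N (Ioc (N / 4) N) u σ :=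
    fun σ ↦ (sum_Ioc_consecutive _ (by lia) (Nat.div_le_self N 4)).symm
  have hsmall : ewensExpect θ N (fun σ ↦ |centeredCycleSum θ N (Ioc M (N / 4)) u σ|) ≤
      ε * √((24 * |θ - 1| * θ ^ 2 + 2 * θ) * Real.log (N / M)) := by
    rw [← Real.sqrt_sq hε, ← Real.sqrt_mul (sq_nonneg ε)]
    refine (ewensExpect_abs_le_sqrt hθ _).trans (Real.sqrt_le_sqrt ?_)
    refine (ewensExpect_centeredCycleSum_sq_le hθ (fun j hj ↦ ?_) hu).trans ?_
    · have := mem_Ioc.1 hj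
      exact mem_Icc.2 ⟨by lia, this.2⟩
    · gcongr
      refine (sum_Ioc_one_div_le_log hM (by lia)).trans ?_
      have : 0 < N / 4 := by lia
      gcongr
      exact Nat.div_le_self N 4
  have hlarge : ewensExpect θ N (fun σ ↦ |centeredCycleSum θ N (Ioc (N / 4) N) u σ|) ≤ ε * 8 := by
    refine (ewensExpect_abs_centeredCycleSum_le hθ N _ hu).trans ?_
    have h := sum_ewensExpect_cycleCount_le hθ (N := N) (T := Ioc (N / 4) N) (a := N / 4)
      (fun j hj ↦ mem_Icc.2 (by have := mem_Ioc.1 hj; lia)) (by positivity) fun j hj ↦ by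
        rw [div_le_iff₀' four_pos]
        exact mod_cast (by have := mem_Ioc.1 hj; lia : N ≤ 4 * j)
    rw [div_div_cancel₀ hN0.ne'] at h
    gcongr
    linarith
  calc ewensExpect θ N (fun σ ↦ |centeredCycleSum θ N (Ioc M N) u σ|)
      ≤ ewensExpect θ N (fun σ ↦ |centeredCycleSum θ N (Ioc M (N / 4)) u σ| +
          |centeredCycleSum θ N (Ioc (N / 4) N) u σ|) :=
        ewensExpect_mono hθ fun σ ↦ by rw [hsplit]; exact abs_add_le _ _
    _ ≤ _ := by
        rw [ewensExpect_add, mul_add]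
        exact add_le_add hsmall hlarge

end CenteredCycleSum

/-! ### Poisson approximation of the short cycles -/

section PoissonApproximation

theorem sum_Icc_inv_le_one_add_log (M : ℕ) : ∑ j ∈ Icc 1 M, (j : ℝ)⁻¹ ≤ 1 + Real.log M := by
  have h := harmonic_le_one_add_log M
  rw [harmonic_eq_sum_Icc] at h
  push_cast at h
  exact h

theorem norm_ewensExpect_prod_map_parts_sub_exp_le {𝕜 : Type*} [RCLike 𝕜] {θ : ℝ} {N : ℕ}
    {S : Finset ℕ} (hS : 0 ∉ S) {v : ℕ → 𝕜} (hv : ∀ j ∉ S, v j = 1) {B r : ℝ}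
    (hratio : ∀ k, |ewensRatio θ N k - 1| ≤ B * r ^ k) :
    ‖ewensExpect θ N (fun σ ↦ (σ.partition.parts.map v).prod) -
        NormedSpace.exp (∑ j ∈ S, θ * (v j - 1) / j)‖ ≤
      B * Real.exp (∑ j ∈ S, r ^ j * (|θ| * ‖v j - 1‖) / j) := by
  set w : ℕ → 𝕜 := fun j ↦ θ * (v j - 1) with hw
  have hw0 : ∀ j ∉ S, w j = 0 := fun j hj ↦ by simp [hw, hv j hj]
  have hexp : HasSum (cycleIndex w) (NormedSpace.exp (∑ j ∈ S, w j / j)) := hasSum_cycleIndex hS hw0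
  have hexpect : HasSum (fun k ↦ (ewensRatio θ N k : 𝕜) * cycleIndex w k)
      (ewensExpect θ N fun σ ↦ (σ.partition.parts.map v).prod) := by
    rw [ewensExpect_prod_map_parts]
    refine hasSum_sum_of_ne_finset_zero fun k hk ↦ ?_
    rw [ewensRatio, if_neg fun h ↦ hk (mem_range.2 (Nat.lt_succ_of_le h)), RCLike.ofReal_zero,
      zero_mul]
  have hmajorant : HasSum (fun k ↦ B * cycleIndex (fun j ↦ r ^ j * ‖w j‖) k)
      (B * Real.exp (∑ j ∈ S, r ^ j * (|θ| * ‖v j - 1‖) / j)) := by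
    have h := hasSum_cycleIndex (𝕜 := ℝ) hS (w := fun j ↦ r ^ j * ‖w j‖)
      fun j hj ↦ by rw [hw0 j hj, norm_zero, mul_zero]
    simp only [hw, norm_mul, RCLike.norm_ofReal, ← Real.exp_eq_exp_ℝ] at h ⊢
    exact h.mul_left B
  rw [← (hexpect.sub hexp).tsum_eq]
  refine tsum_of_norm_bounded hmajorant fun k ↦ ?_
  have hdiff : (ewensRatio θ N k : 𝕜) * cycleIndex w k - cycleIndex w k =
      ((ewensRatio θ N k - 1 : ℝ) : 𝕜) * cycleIndex w k := by
    push_cast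
    ring
  rw [hdiff, norm_mul, RCLike.norm_ofReal, cycleIndex_pow_mul, ← mul_assoc]
  exact mul_le_mul (hratio k) (norm_cycleIndex_le w k) (norm_nonneg _)
    ((abs_nonneg _).trans (hratio k))

theorem prod_map_parts_partition_ite {R : Type*} [CommMonoid R] {N : ℕ} (σ : Equiv.Perm (Fin N))
    {S : Finset ℕ} (hS : S ⊆ Icc 1 N) (x : ℕ → R) :
    (σ.partition.parts.map fun j ↦ if j ∈ S then x j else 1).prod =
      ∏ j ∈ S, x j ^ cycleCount N σ j := by
  rw [prod_map_parts_partition, ← prod_subset hS fun j _ hj ↦ by rw [if_neg hj, one_pow]]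
  exact prod_congr rfl fun j hj ↦ by rw [if_pos hj]

theorem le_four_div_mul_exp_half {x q : ℝ} (hx : 0 < x) (hq : 0 < q) (h : 4 * Real.log x ≤ q) :
    x ≤ 4 / q * Real.exp (q / 2) := by
  have hexp : 1 ≤ 4 / q * Real.exp (q / 4) := by
    rw [div_mul_eq_mul_div, one_le_div hq]
    linarith [Real.add_one_le_exp (q / 4)]
  calc x = 1 * Real.exp (Real.log x) := by rw [Real.exp_log hx, one_mul]
    _ ≤ 4 / q * Real.exp (q / 4) * Real.exp (q / 4) :=
        mul_le_mul hexp (Real.exp_le_exp.2 (by linarith)) (Real.exp_nonneg _) (by positivity)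
    _ = 4 / q * Real.exp (q / 2) := by
        rw [mul_assoc, ← Real.exp_add]
        ring_nf

variable {θ : ℝ} (hθ : 0 < θ)
include hθ

theorem abs_ewensRatio_sub_one_le_mul_exp_pow {M N : ℕ} (hM : 1 ≤ M) (hN : 1 ≤ N)
    (hlog : 4 * Real.log N ≤ N / M) (k : ℕ) :
    |ewensRatio θ N k - 1| ≤
      (4 * |θ - 1| + 4 * (2 + 1 / θ)) * (M / N) * Real.exp (1 / M) ^ k := by
  have hM0 : (0 : ℝ) < M := mod_cast hM
  have hN1 : (1 : ℝ) ≤ N := mod_cast hN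
  rw [← Real.exp_nat_mul, mul_one_div, add_mul, add_mul]
  rcases le_or_gt (2 * k) N with hk | hk
  · calc |ewensRatio θ N k - 1| ≤ 4 * |θ - 1| * k / N := abs_ewensRatio_sub_one_le hθ hk
      _ = 4 * |θ - 1| * (M / N) * (k / M) := by field_simp
      _ ≤ 4 * |θ - 1| * (M / N) * Real.exp (k / M) := by
          gcongr
          linarith [Real.add_one_le_exp ((k : ℝ) / M)]
      _ ≤ _ := le_add_of_nonneg_right (by positivity)
  · have hN' : (N : ℝ) ≤ 4 * (M / N) * Real.exp (k / M) := by
      refine (le_four_div_mul_exp_half (by positivity) (by positivity) hlog).trans ?_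
      rw [div_div_eq_mul_div, ← mul_div_assoc, div_div, mul_comm (M : ℝ) 2]
      gcongr 4 * M / N * Real.exp ?_
      rw [div_le_div_iff₀ (by positivity) hM0]
      have : (N : ℝ) ≤ 2 * k := mod_cast hk.le
      nlinarith
    calc |ewensRatio θ N k - 1| ≤ (2 + 1 / θ) * N := by
          have := ewensRatio_nonneg hθ N k
          have := ewensRatio_le hθ hN k
          rw [abs_le]
          constructor <;> linarith
      _ ≤ (2 + 1 / θ) * (4 * (M / N) * Real.exp (k / M)) := by gcongr
      _ = 4 * (2 + 1 / θ) * (M / N) * Real.exp (k / M) := by ring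
      _ ≤ _ := le_add_of_nonneg_left (by positivity)

theorem norm_ewensExpect_exp_sum_sub_exp_le {M N : ℕ} (hM : 1 ≤ M) (hMN : M ≤ N)
    (hlog : 4 * Real.log N ≤ N / M) {u : ℕ → ℝ} {ε : ℝ} (hu : ∀ j, |u j| ≤ ε) :
    ‖ewensExpect θ N (fun σ ↦
          Complex.exp (Complex.I * (∑ j ∈ Icc 1 M, u j * cycleCount N σ j : ℝ))) -
        Complex.exp (∑ j ∈ Icc 1 M, θ * (Complex.exp (Complex.I * u j) - 1) / j)‖ ≤
      (4 * |θ - 1| + 4 * (2 + 1 / θ)) * (M / N) *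
        Real.exp (θ * Real.exp 1 * ε * (1 + Real.log M)) := by
  set v : ℕ → ℂ := fun j ↦ if j ∈ Icc 1 M then Complex.exp (Complex.I * u j) else 1 with hv
  have hprod : ∀ σ : Equiv.Perm (Fin N), (σ.partition.parts.map v).prod =
      Complex.exp (Complex.I * (∑ j ∈ Icc 1 M, u j * cycleCount N σ j : ℝ)) := fun σ ↦ by
    rw [prod_map_parts_partition_ite σ (Icc_subset_Icc_right hMN), Complex.ofReal_sum, mul_sum,
      Complex.exp_sum]
    refine prod_congr rfl fun j _ ↦ ?_
    rw [← Complex.exp_nat_mul]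
    push_cast
    ring_nf
  have hsum : ∑ j ∈ Icc 1 M, (θ : ℂ) * (v j - 1) / j =
      ∑ j ∈ Icc 1 M, θ * (Complex.exp (Complex.I * u j) - 1) / j :=
    sum_congr rfl fun j hj ↦ by simp only [hv, if_pos hj]
  have h := norm_ewensExpect_prod_map_parts_sub_exp_le (S := Icc 1 M) (by simp) (v := v)
    (fun j hj ↦ if_neg hj)
    (abs_ewensRatio_sub_one_le_mul_exp_pow hθ hM (hM.trans hMN) hlog)
  simp only [hprod, RCLike.ofReal_eq_complex_ofReal, hsum, ← Complex.exp_eq_exp_ℂ] at h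
  refine h.trans ?_
  gcongr
  calc ∑ j ∈ Icc 1 M, Real.exp (1 / M) ^ j * (|θ| * ‖v j - 1‖) / j
      ≤ ∑ j ∈ Icc 1 M, θ * Real.exp 1 * ε * (j : ℝ)⁻¹ := by
        refine sum_le_sum fun j hj ↦ ?_
        have hpow : Real.exp (1 / M) ^ j ≤ Real.exp 1 := by
          rw [← Real.exp_nat_mul, mul_one_div]
          exact Real.exp_le_exp.2 (div_le_one_of_le₀ (mod_cast (mem_Icc.1 hj).2) M.cast_nonneg)
        have hnorm : ‖v j - 1‖ ≤ ε := by
          simp only [hv, if_pos hj]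
          exact Real.norm_exp_I_mul_ofReal_sub_one_le.trans (hu j)
        calc Real.exp (1 / M) ^ j * (|θ| * ‖v j - 1‖) / j ≤ Real.exp 1 * (θ * ε) / j := by
              rw [abs_of_pos hθ]
              gcongr
          _ = θ * Real.exp 1 * ε * (j : ℝ)⁻¹ := by ring
    _ ≤ θ * Real.exp 1 * ε * (1 + Real.log M) := by
        rw [← mul_sum]
        have hε : 0 ≤ ε := (abs_nonneg _).trans (hu 0)
        gcongr
        exact sum_Icc_inv_le_one_add_log M

end PoissonApproximation

/-! ### The characteristic function of a linear statistic -/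

section CharFun

/-- The logarithm of the characteristic function of `∑ j ∈ Icc 1 M, u j * (Z_j - E Z_j)`, where the
`Z_j` are independent Poisson variables of mean `θ / j`. -/
noncomputable def poissonExponent (θ : ℝ) (u : ℕ → ℝ) (M : ℕ) : ℂ :=
  ∑ j ∈ Icc 1 M, θ / j * (Complex.exp (Complex.I * u j) - 1 - Complex.I * u j)

theorem norm_exp_I_mul_ofReal_sub_exp_le (a b : ℝ) :
    ‖Complex.exp (Complex.I * a) - Complex.exp (Complex.I * b)‖ ≤ |a - b| := by
  have hfactor : Complex.exp (Complex.I * a) - Complex.exp (Complex.I * b) =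
      Complex.exp (Complex.I * b) * (Complex.exp (Complex.I * (a - b : ℝ)) - 1) := by
    rw [mul_sub, ← Complex.exp_add, mul_one]
    push_cast
    ring_nf
  rw [hfactor, norm_mul, Complex.norm_exp_I_mul_ofReal, one_mul]
  exact Real.norm_exp_I_mul_ofReal_sub_one_le

variable {θ : ℝ} (hθ : 0 < θ)
include hθ

theorem norm_ewensExpect_exp_sub_exp_le {N : ℕ} (F G : Equiv.Perm (Fin N) → ℝ) :
    ‖ewensExpect θ N (fun σ ↦ Complex.exp (Complex.I * F σ)) -
        ewensExpect θ N (fun σ ↦ Complex.exp (Complex.I * G σ))‖ ≤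
      ewensExpect θ N fun σ ↦ |F σ - G σ| := by
  rw [← ewensExpect_sub]
  exact (norm_ewensExpect_le hθ _).trans
    (ewensExpect_mono hθ fun σ ↦ norm_exp_I_mul_ofReal_sub_exp_le _ _)

theorem norm_ewensExpect_exp_poissonCentered_sub_le {M N : ℕ} (hM : 1 ≤ M) (hMN : M ≤ N)
    (hlog : 4 * Real.log N ≤ N / M) {u : ℕ → ℝ} {ε : ℝ} (hu : ∀ j, |u j| ≤ ε) :
    ‖ewensExpect θ N (fun σ ↦
          Complex.exp (Complex.I * (∑ j ∈ Icc 1 M, u j * (cycleCount N σ j - θ / j) : ℝ))) -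
        Complex.exp (poissonExponent θ u M)‖ ≤
      (4 * |θ - 1| + 4 * (2 + 1 / θ)) * (M / N) *
        Real.exp (θ * Real.exp 1 * ε * (1 + Real.log M)) := by
  set c : ℝ := -∑ j ∈ Icc 1 M, u j * (θ / j) with hc
  have hexpect : ∀ σ : Equiv.Perm (Fin N),
      Complex.exp (Complex.I * (∑ j ∈ Icc 1 M, u j * (cycleCount N σ j - θ / j) : ℝ)) =
        Complex.exp (Complex.I * c) •
          Complex.exp (Complex.I * (∑ j ∈ Icc 1 M, u j * cycleCount N σ j : ℝ)) := fun σ ↦ by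
    rw [smul_eq_mul, ← Complex.exp_add, ← mul_add, ← Complex.ofReal_add, hc, neg_add_eq_sub,
      ← sum_sub_distrib]
    simp only [mul_sub]
  have hexponent : poissonExponent θ u M = Complex.I * c +
      ∑ j ∈ Icc 1 M, θ * (Complex.exp (Complex.I * u j) - 1) / j := by
    rw [poissonExponent, hc]
    push_cast
    rw [← sum_neg_distrib, mul_sum, ← sum_add_distrib]
    exact sum_congr rfl fun j _ ↦ by ring
  simp only [hexpect, ewensExpect_smul]
  rw [hexponent, Complex.exp_add, smul_eq_mul, ← mul_sub, norm_mul, Complex.norm_exp_I_mul_ofReal,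
    one_mul]
  exact norm_ewensExpect_exp_sum_sub_exp_le hθ hM hMN hlog hu

theorem abs_sum_mul_div_sub_ewensExpect_le {M N : ℕ} (hMN : 2 * M ≤ N) {u : ℕ → ℝ} {ε : ℝ}
    (hu : ∀ j, |u j| ≤ ε) :
    |∑ j ∈ Icc 1 M, u j * (θ / j - ewensExpect θ N fun σ ↦ (cycleCount N σ j : ℝ))| ≤
      ε * (4 * |θ - 1| * θ) := by
  have hε : 0 ≤ ε := (abs_nonneg _).trans (hu 0)
  calc |∑ j ∈ Icc 1 M, u j * (θ / j - ewensExpect θ N fun σ ↦ (cycleCount N σ j : ℝ))|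
      ≤ ∑ j ∈ Icc 1 M, ε * (4 * |θ - 1| * θ / N) := by
        refine (abs_sum_le_sum_abs _ _).trans (sum_le_sum fun j hj ↦ ?_)
        obtain ⟨hj1, hjM⟩ := mem_Icc.1 hj
        have : (0 : ℝ) < j := mod_cast hj1
        rw [abs_mul, ewensExpect_cycleCount hθ hj1]
        refine mul_le_mul (hu j) ?_ (abs_nonneg _) hε
        calc |θ / j - θ / j * ewensRatio θ N j| = θ / j * |ewensRatio θ N j - 1| := by
              rw [← abs_of_pos (show 0 < θ / j by positivity), ← abs_mul, abs_sub_comm,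
                abs_of_pos (show 0 < θ / j by positivity), mul_sub_one]
          _ ≤ θ / j * (4 * |θ - 1| * j / N) := by
              gcongr
              exact abs_ewensRatio_sub_one_le hθ (by lia)
          _ = 4 * |θ - 1| * θ / N := by field_simp
    _ = ε * (4 * |θ - 1| * θ * (M / N)) := by
        rw [sum_const, Nat.card_Icc, Nat.add_sub_cancel, nsmul_eq_mul]
        ring
    _ ≤ ε * (4 * |θ - 1| * θ * 1) := by
        gcongr
        exact div_le_one_of_le₀ (mod_cast (by lia : M ≤ N)) N.cast_nonneg
    _ = _ := by rw [mul_one]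

theorem ewensExpect_abs_centeredCycleSum_sub_le {M N : ℕ} (hM : 1 ≤ M) (hMN : 4 * M ≤ N)
    {u : ℕ → ℝ} {ε : ℝ} (hu : ∀ j, |u j| ≤ ε) :
    ewensExpect θ N (fun σ ↦ |centeredCycleSum θ N (Icc 1 N) u σ -
        ∑ j ∈ Icc 1 M, u j * (cycleCount N σ j - θ / j)|) ≤
      ε * (√((24 * |θ - 1| * θ ^ 2 + 2 * θ) * Real.log (N / M)) + (8 + 4 * |θ - 1| * θ)) := by
  set m : ℕ → ℝ := fun j ↦ ewensExpect θ N fun σ ↦ (cycleCount N σ j : ℝ)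
  have hsplit : ∀ σ : Equiv.Perm (Fin N), centeredCycleSum θ N (Icc 1 N) u σ -
      ∑ j ∈ Icc 1 M, u j * (cycleCount N σ j - θ / j) =
        centeredCycleSum θ N (Ioc M N) u σ + ∑ j ∈ Icc 1 M, u j * (θ / j - m j) := fun σ ↦ by
    rw [← zero_add 1, Icc_add_one_left_eq_Ioc, Icc_add_one_left_eq_Ioc, centeredCycleSum,
      centeredCycleSum, ← sum_Ioc_consecutive _ M.zero_le (by lia : M ≤ N), add_sub_right_comm,
      ← sum_sub_distrib, add_comm]
    exact congrArg _ (sum_congr rfl fun j _ ↦ by ring)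
  calc _ ≤ ewensExpect θ N (fun σ ↦
        |centeredCycleSum θ N (Ioc M N) u σ| + ε * (4 * |θ - 1| * θ)) := by
        refine ewensExpect_mono hθ fun σ ↦ ?_
        rw [hsplit]
        exact (abs_add_le _ _).trans
          (add_le_add le_rfl (abs_sum_mul_div_sub_ewensExpect_le hθ (by lia) hu))
    _ ≤ _ := by
        rw [ewensExpect_add, ewensExpect_const hθ, ← add_assoc, mul_add ε (_ + _)]
        gcongr
        exact ewensExpect_abs_centeredCycleSum_Ioc_le hθ hM hMN hu

theorem norm_ewensExpect_exp_centeredCycleSum_sub_le {M N : ℕ} (hM : 1 ≤ M) (hMN : 4 * M ≤ N)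
    (hlog : 4 * Real.log N ≤ N / M) {u : ℕ → ℝ} {ε : ℝ} (hu : ∀ j, |u j| ≤ ε) :
    ‖ewensExpect θ N (fun σ ↦ Complex.exp (Complex.I * centeredCycleSum θ N (Icc 1 N) u σ)) -
        Complex.exp (poissonExponent θ u M)‖ ≤
      ε * (√((24 * |θ - 1| * θ ^ 2 + 2 * θ) * Real.log (N / M)) + (8 + 4 * |θ - 1| * θ)) +
        (4 * |θ - 1| + 4 * (2 + 1 / θ)) * (M / N) *
          Real.exp (θ * Real.exp 1 * ε * (1 + Real.log M)) :=
  (norm_sub_le_norm_sub_add_norm_sub _ _ _).trans <| add_le_add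
    ((norm_ewensExpect_exp_sub_exp_le hθ _ _).trans
      (ewensExpect_abs_centeredCycleSum_sub_le hθ hM hMN hu))
    (norm_ewensExpect_exp_poissonCentered_sub_le hθ hM (by lia) hlog hu)

end CharFun

/-! ### Logarithmic asymptotics -/

section Asymptotics

theorem tendsto_log_natCast_atTop : Tendsto (fun n : ℕ ↦ Real.log n) atTop atTop :=
  Real.tendsto_log_atTop.comp tendsto_natCast_atTop_atTop

theorem tendsto_div_sqrt_log (b : ℝ) : Tendsto (fun N : ℕ ↦ b / √(Real.log N)) atTop (𝓝 0) :=
  tendsto_const_nhds.div_atTop (Real.tendsto_sqrt_atTop.comp tendsto_log_natCast_atTop)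

theorem tendsto_harmonic_div_log :
    Tendsto (fun n : ℕ ↦ (harmonic n : ℝ) / Real.log n) atTop (𝓝 1) := by
  have h := (Real.tendsto_harmonic_sub_log.div_atTop tendsto_log_natCast_atTop).add_const 1
  rw [zero_add] at h
  refine h.congr' ?_
  filter_upwards [tendsto_log_natCast_atTop.eventually_gt_atTop 0] with n hn
  field_simp
  ring

theorem sum_Icc_div_eq_cesaro_add_sum_range (a : ℕ → ℝ) (n : ℕ) :
    ∑ j ∈ Icc 1 n, a j / j = 1 / (n : ℝ) * ∑ j ∈ Icc 1 n, a j +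
      ∑ k ∈ range n, 1 / (k : ℝ) * (∑ j ∈ Icc 1 k, a j) * ((k + 1 : ℕ) : ℝ)⁻¹ := by
  induction n with
  | zero => simp
  | succ n ih =>
    rw [← insert_Icc_right_eq_Icc_add_one (by lia), sum_insert (by simp), sum_insert (by simp),
      ih, sum_range_succ]
    rcases n.eq_zero_or_pos with rfl | hn
    · simp
    · push_cast
      field_simp
      ring

theorem tendsto_sum_div_div_log_of_tendsto_cesaro {a : ℕ → ℝ} {c : ℝ}
    (h : Tendsto (fun N : ℕ ↦ 1 / (N : ℝ) * ∑ j ∈ Icc 1 N, a j) atTop (𝓝 c)) :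
    Tendsto (fun N : ℕ ↦ (∑ j ∈ Icc 1 N, a j / j) / Real.log N) atTop (𝓝 c) := by
  set b : ℕ → ℝ := fun N ↦ 1 / (N : ℝ) * ∑ j ∈ Icc 1 N, a j
  have hharmonic : ∀ n : ℕ, ∑ k ∈ range n, ((k + 1 : ℕ) : ℝ)⁻¹ = harmonic n := fun n ↦ by
    simp [harmonic]
  have hterm : (fun k ↦ (b k - c) * ((k + 1 : ℕ) : ℝ)⁻¹) =o[atTop]
      fun k : ℕ ↦ ((k + 1 : ℕ) : ℝ)⁻¹ := by
    have hb : (fun k ↦ b k - c) =o[atTop] fun _ ↦ (1 : ℝ) :=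
      (Asymptotics.isLittleO_one_iff ℝ).2 (by simpa using h.sub_const c)
    simpa using hb.mul_isBigO (Asymptotics.isBigO_refl (fun k : ℕ ↦ ((k + 1 : ℕ) : ℝ)⁻¹) atTop)
  have hdiv : Tendsto (fun n : ℕ ↦ (harmonic n : ℝ)) atTop atTop := by
    simpa [← hharmonic] using Real.tendsto_sum_range_one_div_nat_succ_atTop
  have hsum := (hterm.sum_range (fun k ↦ by positivity)
    (by simpa only [hharmonic] using hdiv)).tendsto_div_nhds_zero
  simp only [hharmonic] at hsum
  have hlim := (h.div_atTop tendsto_log_natCast_atTop).add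
    ((hsum.add_const c).mul tendsto_harmonic_div_log)
  rw [zero_add, zero_add, mul_one] at hlim
  refine hlim.congr' ?_
  filter_upwards [hdiv.eventually_gt_atTop 0] with n hn
  simp only [sub_mul, sum_sub_distrib, ← mul_sum, hharmonic,
    sum_Icc_div_eq_cesaro_add_sum_range a, b]
  field_simp
  ring

/-- `M N` is an intermediate scale: it is `N ^ (1 - o(1))`, while `N / M N` eventually exceeds
`exp (C * √(log N))` for every constant `C`. -/
structure IsIntermediateScale (M : ℕ → ℕ) : Prop where
  tendsto_log_div_log : Tendsto (fun N ↦ Real.log (N / M N) / Real.log N) atTop (𝓝 0)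
  tendsto_log_div_sqrt_log : Tendsto (fun N ↦ Real.log (N / M N) / √(Real.log N)) atTop atTop

theorem log_div_ceil_mul_exp_neg_mem_Icc {N : ℕ} (hN : 1 ≤ N) {r : ℝ} (hr : r ≤ Real.log N) :
    Real.log (N / ⌈N * Real.exp (-r)⌉₊) ∈ Set.Icc (r - Real.log 2) r := by
  have hN0 : (0 : ℝ) < N := mod_cast hN
  set y := N * Real.exp (-r) with hy
  have hlogy : Real.log y = Real.log N - r := by
    rw [hy, Real.log_mul hN0.ne' (Real.exp_ne_zero _), Real.log_exp, sub_eq_add_neg]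
  have hy1 : 1 ≤ y := (Real.log_nonneg_iff (by positivity)).1 (by linarith)
  have hceil : (0 : ℝ) < ⌈y⌉₊ := mod_cast Nat.ceil_pos.2 (by linarith)
  rw [Real.log_div hN0.ne' hceil.ne']
  have hlower : Real.log y ≤ Real.log ⌈y⌉₊ := Real.log_le_log (by linarith) (Nat.le_ceil y)
  have hupper : Real.log ⌈y⌉₊ ≤ Real.log 2 + Real.log y := by
    rw [← Real.log_mul two_ne_zero (by linarith)]
    exact Real.log_le_log hceil (by linarith [Nat.ceil_lt_add_one (show 0 ≤ y by linarith)])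
  constructor <;> linarith

theorem exists_isIntermediateScale : ∃ M : ℕ → ℕ, IsIntermediateScale M := by
  set L : ℕ → ℝ := fun N ↦ Real.log N
  have hL : Tendsto L atTop atTop := tendsto_log_natCast_atTop
  have hmem : ∀ᶠ N : ℕ in atTop, 0 < L N ∧ Real.log (N / ⌈N * Real.exp (-L N ^ (3 / 4 : ℝ))⌉₊) ∈
      Set.Icc (L N ^ (3 / 4 : ℝ) - Real.log 2) (L N ^ (3 / 4 : ℝ)) := by
    filter_upwards [eventually_ge_atTop 1, hL.eventually_ge_atTop 1] with N hN hLN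
    exact ⟨by linarith, log_div_ceil_mul_exp_neg_mem_Icc hN
      (Real.rpow_le_self_of_one_le hLN (by norm_num))⟩
  refine ⟨fun N ↦ ⌈N * Real.exp (-L N ^ (3 / 4 : ℝ))⌉₊, ?_, ?_⟩
  · have hlower : Tendsto (fun N ↦ - Real.log 2 / L N) atTop (𝓝 0) :=
      tendsto_const_nhds.div_atTop hL
    have hupper : Tendsto (fun N ↦ L N ^ (-(1 / 4) : ℝ)) atTop (𝓝 0) :=
      (tendsto_rpow_neg_atTop (by norm_num)).comp hL
    refine tendsto_of_tendsto_of_tendsto_of_le_of_le' hlower hupper ?_ ?_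
    · filter_upwards [hmem] with N ⟨hLN, hN, _⟩
      gcongr
      linarith [Real.rpow_nonneg hLN.le (3 / 4)]
    · filter_upwards [hmem] with N ⟨hLN, _, hN⟩
      rw [div_le_iff₀ hLN, ← Real.rpow_add_one hLN.ne']
      norm_num
      exact hN
  · have hlower : Tendsto (fun N ↦ L N ^ (1 / 4 : ℝ) - Real.log 2) atTop atTop :=
      tendsto_atTop_add_const_right _ _ ((tendsto_rpow_atTop (by norm_num)).comp hL)
    refine tendsto_atTop_mono' _ ?_ hlower
    filter_upwards [hmem, hL.eventually_ge_atTop 1] with N ⟨hLN, hN, _⟩ hLN1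
    rw [le_div_iff₀ (Real.sqrt_pos.2 hLN), sub_mul, Real.sqrt_eq_rpow, ← Real.rpow_add hLN]
    have hsqrt : 1 ≤ L N ^ (1 / 2 : ℝ) := Real.one_le_rpow hLN1 (by norm_num)
    norm_num at hN hsqrt ⊢
    nlinarith [Real.log_pos one_lt_two]

namespace IsIntermediateScale

variable {M : ℕ → ℕ} (hM : IsIntermediateScale M)
include hM

theorem eventually_pos : ∀ᶠ N in atTop, 0 < M N := by
  filter_upwards [hM.tendsto_log_div_sqrt_log.eventually_gt_atTop 0] with N hN
  refine Nat.pos_of_ne_zero fun h ↦ ?_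
  simp [h] at hN

theorem tendsto_log_scale_div_log : Tendsto (fun N ↦ Real.log (M N) / Real.log N) atTop (𝓝 1) := by
  have h := hM.tendsto_log_div_log.const_sub 1
  rw [sub_zero] at h
  refine h.congr' ?_
  filter_upwards [hM.eventually_pos, tendsto_log_natCast_atTop.eventually_gt_atTop 0,
    eventually_gt_atTop 0] with N hMN hlog hN
  rw [Real.log_div (by positivity) (by positivity)]
  field_simp
  ring

theorem tendsto_atTop : Tendsto M atTop atTop := by
  have hlog : Tendsto (fun N ↦ Real.log (M N)) atTop atTop := by
    refine (hM.tendsto_log_scale_div_log.pos_mul_atTop one_pos tendsto_log_natCast_atTop).congr' ?_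
    filter_upwards [tendsto_log_natCast_atTop.eventually_gt_atTop 0] with N hN
    rw [div_mul_cancel₀ _ hN.ne']
  exact tendsto_natCast_atTop_iff.1
    (tendsto_atTop_mono (fun N ↦ Real.log_le_self (M N).cast_nonneg) hlog)

theorem tendsto_sum_sq_div_log {u : ℕ → ℝ} {c : ℝ}
    (hc : Tendsto (fun N : ℕ ↦ 1 / (N : ℝ) * ∑ j ∈ Icc 1 N, u j ^ 2) atTop (𝓝 c)) :
    Tendsto (fun N ↦ (∑ j ∈ Icc 1 (M N), u j ^ 2 / j) / Real.log N) atTop (𝓝 c) := by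
  have h := ((tendsto_sum_div_div_log_of_tendsto_cesaro hc).comp hM.tendsto_atTop).mul
    hM.tendsto_log_scale_div_log
  rw [mul_one] at h
  refine h.congr' ?_
  filter_upwards [hM.tendsto_atTop.eventually_gt_atTop 1] with N hN
  have hlog : 0 < Real.log (M N) := Real.log_pos (mod_cast hN)
  simp only [Function.comp_apply]
  field_simp

theorem eventually_exp_le (C : ℝ) :
    ∀ᶠ N : ℕ in atTop, Real.exp (C * √(Real.log N)) ≤ N / M N := by
  filter_upwards [hM.tendsto_log_div_sqrt_log.eventually_ge_atTop C, hM.eventually_pos,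
    tendsto_log_natCast_atTop.eventually_gt_atTop 0, eventually_gt_atTop 0] with N hC hMN hlog hN
  rw [← Real.le_log_iff_exp_le (by positivity)]
  exact (le_div_iff₀ (Real.sqrt_pos.2 hlog)).1 hC

theorem eventually_four_mul_le : ∀ᶠ N in atTop, 4 * M N ≤ N := by
  filter_upwards [hM.eventually_exp_le 2, tendsto_log_natCast_atTop.eventually_ge_atTop (2 ^ 2),
    hM.eventually_pos] with N hN hlog hMN
  have hMN0 : (0 : ℝ) < M N := mod_cast hMN
  have hsqrt : 2 ≤ √(Real.log N) := Real.le_sqrt_of_sq_le hlog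
  have h : (4 : ℝ) ≤ N / M N :=
    (by linarith [Real.add_one_le_exp (2 * √(Real.log N))] : (4 : ℝ) ≤ _).trans hN
  exact_mod_cast (le_div_iff₀ hMN0).1 h

theorem eventually_four_mul_log_le : ∀ᶠ N : ℕ in atTop, 4 * Real.log N ≤ N / M N := by
  filter_upwards [hM.eventually_exp_le 3] with N hN
  refine le_trans ?_ hN
  have h := Real.quadratic_le_exp_of_nonneg (x := 3 * √(Real.log N)) (by positivity)
  rw [mul_pow, Real.sq_sqrt (Real.log_natCast_nonneg N)] at h
  linarith [Real.sqrt_nonneg (Real.log N), Real.log_natCast_nonneg N]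

theorem tendsto_div_mul_exp (A : ℝ) :
    Tendsto (fun N : ℕ ↦ M N / N * Real.exp (A * √(Real.log N))) atTop (𝓝 0) := by
  have hsqrt : Tendsto (fun N : ℕ ↦ √(Real.log N)) atTop atTop :=
    Real.tendsto_sqrt_atTop.comp tendsto_log_natCast_atTop
  have hexp : Tendsto (fun N : ℕ ↦ Real.exp (-√(Real.log N))) atTop (𝓝 0) :=
    Real.tendsto_exp_neg_atTop_nhds_zero.comp hsqrt
  refine squeeze_zero' (.of_forall fun N ↦ by positivity) ?_ hexp
  filter_upwards [hM.eventually_exp_le (A + 1), hM.eventually_pos] with N hN _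
  have hratio : (M N / N : ℝ) ≤ Real.exp (-((A + 1) * √(Real.log N))) := by
    rw [Real.exp_neg, ← inv_div]
    exact inv_anti₀ (Real.exp_pos _) hN
  calc M N / N * Real.exp (A * √(Real.log N))
      ≤ Real.exp (-((A + 1) * √(Real.log N))) * Real.exp (A * √(Real.log N)) := by gcongr
    _ = Real.exp (-√(Real.log N)) := by
      rw [← Real.exp_add]
      ring_nf

theorem tendsto_div_sqrt_log_mul_sqrt_add (b K A : ℝ) :
    Tendsto (fun N : ℕ ↦ b / √(Real.log N) * (√(K * Real.log (N / M N)) + A)) atTop (𝓝 0) := by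
  have hsqrt : Tendsto (fun N : ℕ ↦ √(K * (Real.log (N / M N) / Real.log N))) atTop (𝓝 0) := by
    simpa using (hM.tendsto_log_div_log.const_mul K).sqrt
  have h := (hsqrt.const_mul b).add (tendsto_div_sqrt_log (b * A))
  rw [mul_zero, zero_add] at h
  refine h.congr fun N ↦ ?_
  rw [← mul_div_assoc, Real.sqrt_div' _ (Real.log_natCast_nonneg N)]
  ring

theorem tendsto_mul_div_mul_exp (b C D : ℝ) :
    Tendsto (fun N : ℕ ↦ C * (M N / N) *
      Real.exp (D * (b / √(Real.log N)) * (1 + Real.log (M N)))) atTop (𝓝 0) := by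
  have h := (hM.tendsto_div_mul_exp (2 * |D * b|)).const_mul |C|
  rw [mul_zero] at h
  refine squeeze_zero_norm' ?_ h
  filter_upwards [hM.eventually_four_mul_le, hM.eventually_pos,
    tendsto_log_natCast_atTop.eventually_ge_atTop 1] with N hMN hpos hlog
  have hsqrt : 0 < √(Real.log N) := Real.sqrt_pos.2 (by linarith)
  have hlogM : Real.log (M N) ≤ Real.log N :=
    Real.log_le_log (mod_cast hpos) (mod_cast (by lia : M N ≤ N))
  have hexponent : D * (b / √(Real.log N)) * (1 + Real.log (M N)) ≤
      2 * |D * b| * √(Real.log N) := by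
    calc D * (b / √(Real.log N)) * (1 + Real.log (M N))
        = D * b * ((1 + Real.log (M N)) / √(Real.log N)) := by ring
      _ ≤ |D * b| * (2 * √(Real.log N)) := by
          gcongr
          · exact le_abs_self _
          · rw [div_le_iff₀ hsqrt, mul_assoc, Real.mul_self_sqrt (Real.log_natCast_nonneg N)]
            linarith
      _ = _ := by ring
  rw [norm_mul, norm_mul, Real.norm_eq_abs C, Real.norm_of_nonneg (by positivity),
    Real.norm_of_nonneg (Real.exp_nonneg _), mul_assoc]
  gcongr

end IsIntermediateScale

end Asymptotics

/-! ### The central limit theorem for centred linear statistics -/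

section CentralLimit

theorem norm_exp_I_mul_ofReal_sub_taylor_le {y : ℝ} (hy : |y| ≤ 1) :
    ‖Complex.exp (Complex.I * y) - 1 - Complex.I * y + (y ^ 2 / 2 : ℝ)‖ ≤ |y| ^ 3 := by
  have hnorm : ‖Complex.I * (y : ℂ)‖ = |y| := by simp
  have h := Complex.exp_bound (hnorm.trans_le hy) (n := 3) (by norm_num)
  rw [hnorm] at h
  have hsum : ∑ m ∈ range 3, (Complex.I * (y : ℂ)) ^ m / (m ! : ℂ) =
      1 + Complex.I * y - (y ^ 2 / 2 : ℝ) := by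
    simp only [sum_range_succ, sum_range_zero, Nat.factorial, mul_pow, Complex.I_sq]
    push_cast
    ring
  rw [hsum] at h
  refine (le_of_eq ?_).trans (h.trans (mul_le_of_le_one_right (by positivity) ?_))
  · congr 1
    ring
  · norm_num [Nat.factorial]

theorem abs_div_sqrt_log_le {a b : ℝ} (hab : |a| ≤ b) (N : ℕ) :
    |a / √(Real.log N)| ≤ b / √(Real.log N) := by
  rw [abs_div, abs_of_nonneg (Real.sqrt_nonneg _)]
  gcongr

variable {θ : ℝ} (hθ : 0 < θ)
include hθ

theorem norm_poissonExponent_add_le {u : ℕ → ℝ} {ε : ℝ} (hε : ε ≤ 1) (hu : ∀ j, |u j| ≤ ε)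
    (M : ℕ) :
    ‖poissonExponent θ u M + (θ / 2 * ∑ j ∈ Icc 1 M, u j ^ 2 / j : ℝ)‖ ≤
      θ * ε ^ 3 * (1 + Real.log M) := by
  have hε0 : 0 ≤ ε := (abs_nonneg _).trans (hu 0)
  have hsum : poissonExponent θ u M + (θ / 2 * ∑ j ∈ Icc 1 M, u j ^ 2 / j : ℝ) =
      ∑ j ∈ Icc 1 M, (θ / j : ℝ) *
        (Complex.exp (Complex.I * u j) - 1 - Complex.I * u j + (u j ^ 2 / 2 : ℝ)) := by
    rw [poissonExponent]
    push_cast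
    rw [mul_sum, ← sum_add_distrib]
    exact sum_congr rfl fun j _ ↦ by ring
  rw [hsum]
  calc _ ≤ ∑ j ∈ Icc 1 M, θ * ε ^ 3 * (j : ℝ)⁻¹ := by
        refine (norm_sum_le _ _).trans (sum_le_sum fun j _ ↦ ?_)
        rw [norm_mul, Complex.norm_of_nonneg (by positivity), mul_right_comm, ← div_eq_mul_inv]
        gcongr
        exact (norm_exp_I_mul_ofReal_sub_taylor_le ((hu j).trans hε)).trans
          (pow_le_pow_left₀ (abs_nonneg _) (hu j) 3)
    _ ≤ θ * ε ^ 3 * (1 + Real.log M) := by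
        rw [← mul_sum]
        gcongr
        exact sum_Icc_inv_le_one_add_log M

theorem IsIntermediateScale.tendsto_poissonExponent {M : ℕ → ℕ} (hM : IsIntermediateScale M)
    {u : ℕ → ℝ} {b c : ℝ} (hu : ∀ j, |u j| ≤ b)
    (hc : Tendsto (fun N : ℕ ↦ 1 / (N : ℝ) * ∑ j ∈ Icc 1 N, u j ^ 2) atTop (𝓝 c)) :
    Tendsto (fun N : ℕ ↦ poissonExponent θ (fun j ↦ u j / √(Real.log N)) (M N)) atTop
      (𝓝 (-(θ * c / 2) : ℝ)) := by
  have hquadratic : Tendsto (fun N : ℕ ↦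
      θ / 2 * ∑ j ∈ Icc 1 (M N), (u j / √(Real.log N)) ^ 2 / j) atTop (𝓝 (θ * c / 2)) := by
    have h := (hM.tendsto_sum_sq_div_log hc).const_mul (θ / 2)
    rw [div_mul_eq_mul_div] at h
    refine h.congr fun N ↦ ?_
    simp only [div_pow, Real.sq_sqrt (Real.log_natCast_nonneg N), div_right_comm _ (Real.log N),
      sum_div]
  have hcubic : Tendsto (fun N : ℕ ↦ θ * (b / √(Real.log N)) ^ 3 * (1 + Real.log (M N))) atTop
      (𝓝 0) := by
    have h := (tendsto_div_sqrt_log (θ * b ^ 3)).mul ((tendsto_const_nhds.div_atTop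
      tendsto_log_natCast_atTop (a := 1)).add hM.tendsto_log_scale_div_log)
    rw [zero_mul] at h
    refine h.congr fun N ↦ ?_
    rw [← add_div, div_pow, pow_succ (√_) 2, Real.sq_sqrt (Real.log_natCast_nonneg N)]
    ring
  have herror := squeeze_zero_norm' (f := fun N : ℕ ↦
      poissonExponent θ (fun j ↦ u j / √(Real.log N)) (M N) +
        (θ / 2 * ∑ j ∈ Icc 1 (M N), (u j / √(Real.log N)) ^ 2 / j : ℝ)) (by
    filter_upwards [(tendsto_div_sqrt_log b).eventually_le_const one_pos] with N hN
    exact norm_poissonExponent_add_le hθ hN (fun j ↦ abs_div_sqrt_log_le (hu j) N) (M N)) hcubic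
  have h := herror.sub ((Complex.continuous_ofReal.tendsto _).comp hquadratic)
  simpa using h

theorem IsIntermediateScale.tendsto_ewensExpect_exp_sub {M : ℕ → ℕ} (hM : IsIntermediateScale M)
    {u : ℕ → ℝ} {b : ℝ} (hu : ∀ j, |u j| ≤ b) :
    Tendsto (fun N : ℕ ↦
      ewensExpect θ N (fun σ ↦ Complex.exp (Complex.I *
        centeredCycleSum θ N (Icc 1 N) (fun j ↦ u j / √(Real.log N)) σ)) -
      Complex.exp (poissonExponent θ (fun j ↦ u j / √(Real.log N)) (M N))) atTop (𝓝 0) := by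
  have herror := (hM.tendsto_div_sqrt_log_mul_sqrt_add b (24 * |θ - 1| * θ ^ 2 + 2 * θ)
    (8 + 4 * |θ - 1| * θ)).add (hM.tendsto_mul_div_mul_exp b (4 * |θ - 1| + 4 * (2 + 1 / θ))
      (θ * Real.exp 1))
  rw [add_zero] at herror
  refine squeeze_zero_norm' ?_ herror
  filter_upwards [hM.eventually_pos, hM.eventually_four_mul_le, hM.eventually_four_mul_log_le]
    with N hpos hle hlog
  exact norm_ewensExpect_exp_centeredCycleSum_sub_le hθ hpos hle hlog
    fun j ↦ abs_div_sqrt_log_le (hu j) N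

theorem tendsto_ewensExpect_exp_centeredCycleSum {u : ℕ → ℝ} {b c : ℝ} (hu : ∀ j, |u j| ≤ b)
    (hc : Tendsto (fun N : ℕ ↦ 1 / (N : ℝ) * ∑ j ∈ Icc 1 N, u j ^ 2) atTop (𝓝 c)) :
    Tendsto (fun N : ℕ ↦ ewensExpect θ N fun σ ↦ Complex.exp (Complex.I *
      centeredCycleSum θ N (Icc 1 N) (fun j ↦ u j / √(Real.log N)) σ)) atTop
      (𝓝 (Complex.exp (-(θ * c / 2) : ℝ))) := by
  obtain ⟨M, hM⟩ := exists_isIntermediateScale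
  have hpoisson := (Complex.continuous_exp.tendsto _).comp (hM.tendsto_poissonExponent hθ hu hc)
  simpa using (hM.tendsto_ewensExpect_exp_sub hθ hu).add hpoisson

end CentralLimit

section WeakConvergence

/-- The law of the random variable `Y` under the Ewens measure of parameter `θ`. -/
noncomputable def ewensLaw (θ : ℝ) {N : ℕ} (Y : Equiv.Perm (Fin N) → ℝ) : Measure ℝ :=
  ∑ σ, ENNReal.ofReal (ewens θ N σ) • Measure.dirac (Y σ)

variable {θ : ℝ} (hθ : 0 < θ)
include hθ

theorem isProbabilityMeasure_ewensLaw {N : ℕ} (Y : Equiv.Perm (Fin N) → ℝ) :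
    IsProbabilityMeasure (ewensLaw θ Y) := by
  constructor
  simp only [ewensLaw, Measure.coe_finsetSum, Finset.sum_apply, Measure.smul_apply, measure_univ,
    smul_eq_mul, mul_one]
  rw [← ENNReal.ofReal_sum_of_nonneg fun σ _ ↦ ewens_nonneg hθ σ, sum_ewens hθ, ENNReal.ofReal_one]

theorem integral_ewensLaw {E : Type*} [NormedAddCommGroup E] [NormedSpace ℝ E] [CompleteSpace E]
    {N : ℕ} (Y : Equiv.Perm (Fin N) → ℝ) (f : ℝ → E) :
    ∫ x, f x ∂(ewensLaw θ Y) = ewensExpect θ N fun σ ↦ f (Y σ) := by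
  rw [ewensLaw, integral_finsetSum_measure fun σ _ ↦
    (integrable_dirac (by simp)).smul_measure ENNReal.ofReal_ne_top]
  refine sum_congr rfl fun σ _ ↦ ?_
  rw [integral_smul_measure, integral_dirac, ENNReal.toReal_ofReal (ewens_nonneg hθ σ)]

theorem tendsto_ewensExpect_of_tendsto_charFun {Y : ∀ N : ℕ, Equiv.Perm (Fin N) → ℝ}
    {ν : Measure ℝ} [IsProbabilityMeasure ν]
    (h : ∀ t : ℝ, Tendsto (fun N ↦ ewensExpect θ N fun σ ↦
      Complex.exp (Complex.I * (t * Y N σ : ℝ))) atTop (𝓝 (charFun ν t)))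
    {f : ℝ → ℝ} (hf : Continuous f) {C : ℝ} (hC : ∀ x, |f x| ≤ C) :
    Tendsto (fun N ↦ ewensExpect θ N fun σ ↦ f (Y N σ)) atTop (𝓝 (∫ x, f x ∂ν)) := by
  let μ : ℕ → ProbabilityMeasure ℝ := fun N ↦
    ⟨ewensLaw θ (Y N), isProbabilityMeasure_ewensLaw hθ (Y N)⟩
  have hμ : Tendsto μ atTop (𝓝 ⟨ν, inferInstance⟩) := by
    refine ProbabilityMeasure.tendsto_of_tendsto_charFun fun t ↦ (h t).congr fun N ↦ ?_
    change _ = charFun (ewensLaw θ (Y N)) t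
    rw [charFun_apply_real, integral_ewensLaw hθ]
    simp only [Complex.ofReal_mul, mul_comm Complex.I]
  refine (ProbabilityMeasure.tendsto_iff_forall_integral_tendsto.1 hμ
    (BoundedContinuousFunction.ofNormedAddCommGroup f hf C hC)).congr fun N ↦ ?_
  exact integral_ewensLaw hθ (Y N) f

theorem tendsto_ewensExpect_centeredCycleSum_div {u : ℕ → ℝ} {b c : ℝ} (hu : ∀ j, |u j| ≤ b)
    (hc : Tendsto (fun N : ℕ ↦ 1 / (N : ℝ) * ∑ j ∈ Icc 1 N, u j ^ 2) atTop (𝓝 c)) (hc0 : 0 < c)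
    {f : ℝ → ℝ} (hf : Continuous f) {C : ℝ} (hC : ∀ x, |f x| ≤ C) :
    Tendsto (fun N : ℕ ↦ ewensExpect θ N fun σ ↦
        f (centeredCycleSum θ N (Icc 1 N) u σ / √(θ * c * Real.log N))) atTop
      (𝓝 (∫ x, f x ∂(ProbabilityTheory.gaussianReal 0 1))) := by
  refine tendsto_ewensExpect_of_tendsto_charFun hθ (fun t ↦ ?_) hf hC
  set a : ℝ := t / √(θ * c) with ha
  have hau : ∀ j, |a * u j| ≤ |a| * b := fun j ↦ by
    rw [abs_mul]
    exact mul_le_mul_of_nonneg_left (hu j) (abs_nonneg a)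
  have hac : Tendsto (fun N : ℕ ↦ 1 / (N : ℝ) * ∑ j ∈ Icc 1 N, (a * u j) ^ 2) atTop
      (𝓝 (a ^ 2 * c)) :=
    (hc.const_mul (a ^ 2)).congr fun N ↦ by
      simp only [mul_pow, ← mul_sum]
      ring
  have hvariance : θ * (a ^ 2 * c) / 2 = t ^ 2 / 2 := by
    rw [ha, div_pow, Real.sq_sqrt (by positivity)]
    field_simp
  have hgaussian : charFun (ProbabilityTheory.gaussianReal 0 1) t =
      Complex.exp (-(θ * (a ^ 2 * c) / 2) : ℝ) := by
    rw [ProbabilityTheory.charFun_gaussianReal, hvariance]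
    simp
  rw [hgaussian]
  refine (tendsto_ewensExpect_exp_centeredCycleSum hθ hau hac).congr fun N ↦ ?_
  have hscale : ∀ σ, centeredCycleSum θ N (Icc 1 N) (fun j ↦ a * u j / √(Real.log N)) σ =
      t * (centeredCycleSum θ N (Icc 1 N) u σ / √(θ * c * Real.log N)) := fun σ ↦ by
    rw [Real.sqrt_mul (by positivity), centeredCycleSum, centeredCycleSum, sum_div, mul_sum]
    exact sum_congr rfl fun j _ ↦ by rw [ha]; ring
  simp only [hscale]

end WeakConvergence

/-! ### Eigenvalues in an arc -/

section Arc

theorem pos_of_tendsto_cesaro_sq {d : ℕ → ℝ} {δ c : ℝ} (hδ : 0 < δ)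
    (hd : ∀ j, δ ≤ |d (j + 1) - d j|)
    (hc : Tendsto (fun N : ℕ ↦ 1 / (N : ℝ) * ∑ j ∈ Icc 1 N, d j ^ 2) atTop (𝓝 c)) : 0 < c := by
  have hpair : ∀ j, δ ^ 2 / 2 ≤ d j ^ 2 + d (j + 1) ^ 2 := fun j ↦ by
    have h := pow_le_pow_left₀ hδ.le (hd j) 2
    rw [sq_abs] at h
    linarith [sq_nonneg (d (j + 1) + d j)]
  have hsum : ∀ n : ℕ, n * (δ ^ 2 / 2) ≤ ∑ j ∈ Icc 1 (2 * n), d j ^ 2 := fun n ↦ by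
    induction n with
    | zero => simp
    | succ n ih =>
      rw [mul_add_one, sum_Icc_succ_top (by lia), sum_Icc_succ_top (by lia)]
      push_cast
      linarith [hpair (2 * n + 1)]
  have hlower : δ ^ 2 / 4 ≤ c := by
    refine ge_of_tendsto (hc.comp (tendsto_id.const_mul_atTop' two_pos)) ?_
    filter_upwards [eventually_gt_atTop 0] with n hn
    have : (0 : ℝ) < n := mod_cast hn
    simp only [Function.comp_apply, id]
    push_cast
    rw [one_div_mul_eq_div, le_div_iff₀ (by positivity)]
    linarith [hsum n]
  exact (by positivity : 0 < δ ^ 2 / 4).trans_le hlower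

theorem abs_sub_round_le_abs_fract_sub_fract_add_one (α β : ℝ) (j : ℕ) :
    |β - α - round (β - α)| ≤
      |(Int.fract ((j + 1 : ℕ) * β) - Int.fract ((j + 1 : ℕ) * α)) -
        (Int.fract (j * β) - Int.fract (j * α))| := by
  refine (round_le (β - α) (⌊(j + 1 : ℕ) * β⌋ - ⌊(j + 1 : ℕ) * α⌋ - ⌊j * β⌋ + ⌊j * α⌋)).trans_eq ?_
  congr 1
  simp only [Int.fract]
  push_cast
  ring

theorem XNI_eq_add_sum (N : ℕ) (α β : ℝ) (σ : Equiv.Perm (Fin N)) :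
    XNI N α β σ = N * (β - α) +
      ∑ j ∈ Icc 1 N, (Int.fract (j * α) - Int.fract (j * β)) * cycleCount N σ j := by
  have hN : (N : ℝ) = ∑ j ∈ Icc 1 N, (j : ℝ) * cycleCount N σ j := by
    have h := sum_mul_count_parts σ.partition
    simp only [count_parts_partition, Fintype.card_fin] at h
    exact_mod_cast h.symm
  rw [XNI]
  conv_rhs => rw [hN]
  rw [sum_mul, ← sum_add_distrib]
  refine sum_congr rfl fun j _ ↦ ?_
  simp only [Int.fract]
  ring

theorem XNI_sub_ewensMean {θ : ℝ} (hθ : 0 < θ) (N : ℕ) (α β : ℝ) (σ : Equiv.Perm (Fin N)) :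
    XNI N α β σ - ewensMean θ N α β =
      centeredCycleSum θ N (Icc 1 N) (fun j ↦ Int.fract (j * α) - Int.fract (j * β)) σ := by
  have hmean : ewensMean θ N α β = N * (β - α) + ∑ j ∈ Icc 1 N,
      (Int.fract (j * α) - Int.fract (j * β)) *
        ewensExpect θ N fun τ ↦ (cycleCount N τ j : ℝ) := by
    change ewensExpect θ N (XNI N α β) = _
    simp only [funext (XNI_eq_add_sum N α β), ewensExpect_add, ewensExpect_const hθ,
      ewensExpect_sum, ← smul_eq_mul (Int.fract _ - Int.fract _), ewensExpect_smul]
  rw [hmean, XNI_eq_add_sum, centeredCycleSum, add_sub_add_left_eq_sub, ← sum_sub_distrib]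
  simp only [mul_sub]

theorem abs_fract_sub_fract_le_one (x y : ℝ) : |Int.fract x - Int.fract y| ≤ 1 :=
  abs_sub_le_of_nonneg_of_le (Int.fract_nonneg x) (Int.fract_lt_one x).le (Int.fract_nonneg y)
    (Int.fract_lt_one y).le

end Arc

theorem stmt_19_general {θ : ℝ} (hθ : 0 < θ) {α β : ℝ} (hαβ : ∀ k : ℤ, β - α ≠ k) {c₂ : ℝ}
    (hc₂ : Tendsto
      (fun N : ℕ ↦ 1 / (N : ℝ) * ∑ j ∈ Icc 1 N, (Int.fract (j * β) - Int.fract (j * α)) ^ 2)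
      atTop (𝓝 c₂)) :
    0 < c₂ ∧ ∀ f : ℝ → ℝ, Continuous f → (∃ C : ℝ, ∀ x : ℝ, |f x| ≤ C) →
      Tendsto
        (fun N : ℕ ↦ ∑ σ, ewens θ N σ *
          f ((XNI N α β σ - ewensMean θ N α β) / √(θ * c₂ * Real.log N)))
        atTop (𝓝 (∫ x, f x ∂(ProbabilityTheory.gaussianReal 0 1))) := by
  have hpos : 0 < c₂ := pos_of_tendsto_cesaro_sq (abs_pos.2 (sub_ne_zero.2 (hαβ _)))
    (abs_sub_round_le_abs_fract_sub_fract_add_one α β) hc₂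
  refine ⟨hpos, fun f hf ⟨C, hC⟩ ↦ ?_⟩
  simp only [sub_sq_comm (Int.fract (_ * β))] at hc₂
  simpa only [XNI_sub_ewensMean hθ] using! tendsto_ewensExpect_centeredCycleSum_div hθ
    (fun j ↦ abs_fract_sub_fract_le_one (j * α) (j * β)) hc₂ hpos hf hC

/-- Central limit theorem for the number of eigenvalues of an Ewens(θ) random
permutation matrix in a fixed arc: with `c₂ = lim (1/N) ∑_{j=1}^N ({jβ} − {jα})²`,
we have `c₂ > 0` and the normalized counting function
`(X_N^I − E(X_N^I))/√(θ c₂ log N)` converges in distribution (i.e. against every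
bounded continuous test function) to the standard Gaussian `N(0,1)`. -/
theorem stmt_19 (θ : ℝ) (hθ : 0 < θ) (α β : ℝ)
    (hα0 : 0 ≤ α) (hα1 : α < 1) (hαβ : α < β) (hβ : β < α + 1) (c₂ : ℝ)
    (hc₂ : Tendsto
      (fun N : ℕ =>
        (1 / (N : ℝ)) *
          ∑ j ∈ Finset.Icc 1 N,
            (Int.fract ((j : ℝ) * β) - Int.fract ((j : ℝ) * α)) ^ 2)
      atTop (nhds c₂)) :
    0 < c₂ ∧
    ∀ f : ℝ → ℝ, Continuous f → (∃ C : ℝ, ∀ x : ℝ, |f x| ≤ C) →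
      Tendsto
        (fun N : ℕ =>
          ∑ σ : Equiv.Perm (Fin N),
            ewens θ N σ *
              f ((XNI N α β σ - ewensMean θ N α β) / Real.sqrt (θ * c₂ * Real.log N)))
        atTop
        (nhds (∫ x, f x ∂(ProbabilityTheory.gaussianReal 0 1))) :=
  stmt_19_general hθ (fun k hk ↦ by
    have hk0 : (0 : ℝ) < k := by linarith
    have hk1 : (k : ℝ) < 1 := by linarith
    norm_cast at hk0 hk1
    lia) hc₂
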